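/- arXiv:1109.6528 — 2 statements merged into one kernel-verified Lean document; each statement's English description precedes it below -/
import Mathlib

section
/- Let (R,m) be a local ring with depth R > 0 and let M be a stable R-module with Gdim_{R_p}(M_p) = 0 for all primes p ≠ m. Then: (i) M is horizontally linked if and only if Γ_m(M) = 0; (ii) if moreover M is horizontally linked of finite and positive G-dimension, then rgr(M) = depth_R(λM) and rgr(λM) = depth_R(M). -/
open CategoryTheory

noncomputable section

universe u

/-- The `i`-th Ext group `Ext^i_R(M,N)`, as a type (with its `R`-module structure). -/
abbrev extM (R : Type u) [CommRing R] (i : ℕ) (M N : Type u) [AddCommGroup M] [Module R M]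
    [AddCommGroup N] [Module R N] : Type u :=
  ((Ext R (ModuleCat.{u} R) i).obj (Opposite.op (ModuleCat.of R M))).obj (ModuleCat.of R N)

/-- The `i`-th Tor group `Tor^R_i(M,N)`, as a type. -/
abbrev torM (R : Type u) [CommRing R] (i : ℕ) (M N : Type u) [AddCommGroup M] [Module R M]
    [AddCommGroup N] [Module R N] : Type u :=
  ((Tor (ModuleCat.{u} R) i).obj (ModuleCat.of R M)).obj (ModuleCat.of R N)

/-- The `i`-th local cohomology `H^i_I(M)`, as a type. -/
abbrev locCoh (R : Type u) [CommRing R] (I : Ideal R) (i : ℕ) (M : Type u) [AddCommGroup M]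
    [Module R M] : Type u :=
  (localCohomology I i).obj (ModuleCat.of R M)

/-- A submodule `N ≤ M` is superfluous if `K ⊔ N = ⊤` implies `K = ⊤`. -/
def Submodule.IsSuperfluous {R M : Type u} [CommRing R] [AddCommGroup M] [Module R M]
    (N : Submodule R M) : Prop :=
  ∀ K : Submodule R M, K ⊔ N = ⊤ → K = ⊤

/-- A minimal projective resolution of `M` by finitely generated projective modules:
each `P i → Ω^i M` is a projective cover (i.e. has superfluous kernel). -/
structure MinRes (R : Type u) [CommRing R] (M : Type u) [AddCommGroup M] [Module R M] where
  P : ℕ → ModuleCat.{u} R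
  projective : ∀ i, Module.Projective R (P i)
  finite : ∀ i, Module.Finite R (P i)
  d : (i : ℕ) → (↥(P (i + 1)) →ₗ[R] ↥(P i))
  ε : ↥(P 0) →ₗ[R] M
  surj : Function.Surjective ε
  exact0 : LinearMap.range (d 0) = LinearMap.ker ε
  exact : ∀ i, LinearMap.range (d (i + 1)) = LinearMap.ker (d i)
  min_eps : (LinearMap.ker ε).IsSuperfluous
  min_d : ∀ i, (LinearMap.ker (d i)).IsSuperfluous

namespace MinRes

variable {R M : Type u} [CommRing R] [AddCommGroup M] [Module R M]

/-- `T k F` is the Auslander-Bridger transpose `𝒯_{k+1} M = Tr Ω^k M`, computed as the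
cokernel of `P_k* → P_{k+1}*`. -/
def T (F : MinRes R M) (k : ℕ) : Type u :=
  (Module.Dual R ↥(F.P (k + 1))) ⧸ LinearMap.range (F.d k).dualMap

instance (F : MinRes R M) (k : ℕ) : AddCommGroup (F.T k) :=
  inferInstanceAs (AddCommGroup ((Module.Dual R ↥(F.P (k + 1))) ⧸
    LinearMap.range (F.d k).dualMap))

instance (F : MinRes R M) (k : ℕ) : Module R (F.T k) :=
  inferInstanceAs (Module R ((Module.Dual R ↥(F.P (k + 1))) ⧸
    LinearMap.range (F.d k).dualMap))

/-- The transpose `Tr M = coker(P₀* → P₁*)` computed from a minimal projective presentation. -/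
abbrev Tr (F : MinRes R M) : Type u := F.T 0

/-- `λM = ΩTr M`, realized as the image of `P₀* → P₁*` for a minimal projective
presentation `P₁ → P₀ → M → 0`. -/
def lambdaMod (F : MinRes R M) : Type u :=
  ↥(LinearMap.range (F.d 0).dualMap)

instance (F : MinRes R M) : AddCommGroup F.lambdaMod :=
  inferInstanceAs (AddCommGroup ↥(LinearMap.range (F.d 0).dualMap))

instance (F : MinRes R M) : Module R F.lambdaMod :=
  inferInstanceAs (Module R ↥(LinearMap.range (F.d 0).dualMap))

end MinRes

/-- `M` is a horizontally linked `R`-module, i.e. `M ≅ λλM`. -/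
def IsHorizontallyLinked (R : Type u) [CommRing R] (M : Type u) [AddCommGroup M]
    [Module R M] : Prop :=
  ∃ (F : MinRes R M) (G : MinRes R F.lambdaMod), Nonempty (G.lambdaMod ≃ₗ[R] M)

/-- `M` and `N` are horizontally linked to each other: `M ≅ λN` and `N ≅ λM`. -/
def MutuallyLinked (A : Type u) [CommRing A] (M N : Type u) [AddCommGroup M] [Module A M]
    [AddCommGroup N] [Module A N] : Prop :=
  ∃ (F : MinRes A M) (G : MinRes A N),
    Nonempty (F.lambdaMod ≃ₗ[A] N) ∧ Nonempty (G.lambdaMod ≃ₗ[A] M)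

/-- `M` is linked to `N` by the ideal `c`: `c` annihilates both modules and they are
horizontally linked to each other as `R ⧸ c`-modules. -/
def LinkedBy (R : Type u) [CommRing R] (c : Ideal R) (M N : Type u) [AddCommGroup M]
    [Module R M] [AddCommGroup N] [Module R N] : Prop :=
  ∃ (hM : Module.IsTorsionBySet R M c) (hN : Module.IsTorsionBySet R N c),
    letI := hM.module
    letI := hN.module
    MutuallyLinked (R ⧸ c) M N

/-- A stable module: no nonzero projective direct summand. -/
def IsStableModule (R : Type u) [CommRing R] (M : Type u) [AddCommGroup M] [Module R M] : Prop :=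
  ∀ N : Submodule R M, Module.Projective R ↥N → (∃ N' : Submodule R M, IsCompl N N') → N = ⊥

/-- `M` has G-dimension zero: `M` is finitely generated and reflexive,
and `Ext^i(M,R) = 0 = Ext^i(M*,R)` for all `i > 0`. -/
def IsGDimZero (R : Type u) [CommRing R] (M : Type u) [AddCommGroup M] [Module R M] : Prop :=
  Module.Finite R M ∧ Function.Bijective (Module.Dual.eval R M) ∧
    (∀ i : ℕ, 0 < i → Subsingleton (extM R i M R)) ∧
    (∀ i : ℕ, 0 < i → Subsingleton (extM R i (Module.Dual R M) R))

/-- `M` admits a resolution of length `≤ n` by modules of G-dimension zero. -/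
def GDimLE (R : Type u) [CommRing R] : ℕ → ModuleCat.{u} R → Prop
  | 0, M => IsGDimZero R ↥M
  | n + 1, M =>
    ∃ (G : ModuleCat.{u} R) (f : ↥G →ₗ[R] ↥M), IsGDimZero R ↥G ∧ Function.Surjective f ∧
      GDimLE R n (ModuleCat.of R ↥(LinearMap.ker f))

/-- The G-dimension of `M`: the minimal length of a resolution of `M` by modules of
G-dimension zero (`∞` if there is none). -/
def GDim (R : Type u) [CommRing R] (M : Type u) [AddCommGroup M] [Module R M] : ℕ∞ :=
  sInf {n : ℕ∞ | ∃ k : ℕ, n = k ∧ GDimLE R k (ModuleCat.of R M)}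

/-- The reduced grade of `M`: `rgr M = inf{ i > 0 | Ext^i(M,R) ≠ 0 }`. -/
def rgr (R : Type u) [CommRing R] (M : Type u) [AddCommGroup M] [Module R M] : ℕ∞ :=
  sInf {n : ℕ∞ | ∃ k : ℕ, n = k ∧ 0 < k ∧ ¬ Subsingleton (extM R k M R)}

/-- The grade of `M`: `gr M = inf{ i ≥ 0 | Ext^i(M,R) ≠ 0 }`. -/
def egrade (R : Type u) [CommRing R] (M : Type u) [AddCommGroup M] [Module R M] : ℕ∞ :=
  sInf {n : ℕ∞ | ∃ k : ℕ, n = k ∧ ¬ Subsingleton (extM R k M R)}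

/-- `depth_I(M) = inf{ i | Ext^i(R/I, M) ≠ 0 }`; for `I` the maximal ideal of a
local ring this is the depth of `M`. -/
def edepth (R : Type u) [CommRing R] (I : Ideal R) (M : Type u) [AddCommGroup M]
    [Module R M] : ℕ∞ :=
  sInf {n : ℕ∞ | ∃ k : ℕ, n = k ∧ ¬ Subsingleton (extM R k (R ⧸ I) M)}

/-- The depth of the local ring `R`. -/
def rdepth (R : Type u) [CommRing R] [IsLocalRing R] : ℕ∞ :=
  edepth R (IsLocalRing.maximalIdeal R) R

/-- `depth_{R_p}(M_p)`. -/
def locDepth (R : Type u) [CommRing R] (p : Ideal R) [p.IsPrime] (M : Type u) [AddCommGroup M]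
    [Module R M] : ℕ∞ :=
  edepth (Localization.AtPrime p) (IsLocalRing.maximalIdeal (Localization.AtPrime p))
    (LocalizedModule p.primeCompl M)

/-- `depth R_p`. -/
def locRingDepth (R : Type u) [CommRing R] (p : Ideal R) [p.IsPrime] : ℕ∞ :=
  rdepth (Localization.AtPrime p)

/-- `Gdim_{R_p}(M_p)`. -/
def locGDim (R : Type u) [CommRing R] (p : Ideal R) [p.IsPrime] (M : Type u) [AddCommGroup M]
    [Module R M] : ℕ∞ :=
  GDim (Localization.AtPrime p) (LocalizedModule p.primeCompl M)

/-- `rgr_{R_p}(M_p)`. -/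
def locRgr (R : Type u) [CommRing R] (p : Ideal R) [p.IsPrime] (M : Type u) [AddCommGroup M]
    [Module R M] : ℕ∞ :=
  rgr (Localization.AtPrime p) (LocalizedModule p.primeCompl M)

/-- `dim_{R_p}(M_p)`, the Krull dimension of the support of `M_p` over `R_p`. -/
def locDim (R : Type u) [CommRing R] (p : Ideal R) [p.IsPrime] (M : Type u) [AddCommGroup M]
    [Module R M] : WithBot ℕ∞ :=
  ringKrullDim ((Localization.AtPrime p) ⧸
    Module.annihilator (Localization.AtPrime p) (LocalizedModule p.primeCompl M))

/-- `M` satisfies the condition `S̃_k`: `depth_{R_p}(M_p) ≥ min{k, depth R_p}` for all primes. -/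
def Stilde (R : Type u) [CommRing R] (k : ℕ) (M : Type u) [AddCommGroup M] [Module R M] : Prop :=
  ∀ (p : Ideal R) (_ : p.IsPrime), min (k : ℕ∞) (locRingDepth R p) ≤ locDepth R p M

/-- `M` satisfies Serre's condition `(S_k)`:
`depth_{R_p}(M_p) ≥ min{k, dim_{R_p}(M_p)}` for all primes. -/
def SerreS (R : Type u) [CommRing R] (k : ℕ) (M : Type u) [AddCommGroup M] [Module R M] : Prop :=
  ∀ (p : Ideal R) (_ : p.IsPrime),
    min (k : WithBot ℕ∞) (locDim R p M) ≤ (locDepth R p M : WithBot ℕ∞)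

/-- `M` is a `k`-th syzygy module. -/
def IsKthSyzygy (R : Type u) [CommRing R] : ℕ → ModuleCat.{u} R → Prop
  | 0, _ => True
  | k + 1, M =>
    ∃ (P : ModuleCat.{u} R) (f : ↥M →ₗ[R] ↥P), Module.Projective R ↥P ∧ Module.Finite R ↥P ∧
      Function.Injective f ∧ IsKthSyzygy R k (ModuleCat.of R (↥P ⧸ LinearMap.range f))

/-- The `I`-torsion submodule `Γ_I(M) = { x | I^n x = 0 for some n }`. -/
def gammaTorsion (R : Type u) [CommRing R] (I : Ideal R) (M : Type u) [AddCommGroup M]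
    [Module R M] : Submodule R M where
  carrier := {x | ∃ n : ℕ, ∀ a ∈ I ^ n, a • x = 0}
  zero_mem' := ⟨0, fun a _ => smul_zero a⟩
  add_mem' := by
    rintro x y ⟨n, hn⟩ ⟨m, hm⟩
    exact ⟨n + m, fun a ha => by
      rw [smul_add, hn a (Ideal.pow_le_pow_right (Nat.le_add_right n m) ha),
        hm a (Ideal.pow_le_pow_right (Nat.le_add_left m n) ha), add_zero]⟩
  smul_mem' := by
    rintro c x ⟨n, hn⟩
    exact ⟨n, fun a ha => by rw [smul_comm, hn a ha, smul_zero]⟩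

/-- `N` has finite flat dimension (characterized by uniform vanishing of `Tor`). -/
def HasFiniteFlatDim (R : Type u) [CommRing R] (N : Type u) [AddCommGroup N] [Module R N] : Prop :=
  ∃ n : ℕ, ∀ i : ℕ, n < i → ∀ (M : ModuleCat.{u} R), Subsingleton (torM R i ↥M N)

/-- `N` has finite injective dimension (characterized by uniform vanishing of `Ext`). -/
def HasFiniteInjDim (R : Type u) [CommRing R] (N : Type u) [AddCommGroup N] [Module R N] : Prop :=
  ∃ n : ℕ, ∀ i : ℕ, n < i → ∀ (M : ModuleCat.{u} R), Subsingleton (extM R i ↥M N)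

/-- `K` is a semidualizing `R`-module. -/
def IsSemidualizing (R : Type u) [CommRing R] (K : Type u) [AddCommGroup K] [Module R K] : Prop :=
  Module.Finite R K ∧ Function.Bijective (LinearMap.lsmul R K) ∧
    ∀ i : ℕ, 0 < i → Subsingleton (extM R i K K)

/-- The biduality map `M → Hom(Hom(M,K),K)`. -/
def evalK (R : Type u) [CommRing R] (K M : Type u) [AddCommGroup K] [Module R K]
    [AddCommGroup M] [Module R M] : M →ₗ[R] ((M →ₗ[R] K) →ₗ[R] K) :=
  LinearMap.applyₗ

/-- `M` has `G_K`-dimension zero. -/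
def IsGKDimZero (R : Type u) [CommRing R] (K M : Type u) [AddCommGroup K] [Module R K]
    [AddCommGroup M] [Module R M] : Prop :=
  Module.Finite R M ∧ Function.Bijective (evalK R K M) ∧
    (∀ i : ℕ, 0 < i → Subsingleton (extM R i M K)) ∧
    (∀ i : ℕ, 0 < i → Subsingleton (extM R i (M →ₗ[R] K) K))

/-- `M` admits a resolution of length `≤ n` by modules of `G_K`-dimension zero. -/
def GKDimLE (R : Type u) [CommRing R] (K : Type u) [AddCommGroup K] [Module R K] :
    ℕ → ModuleCat.{u} R → Prop
  | 0, M => IsGKDimZero R K ↥M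
  | n + 1, M =>
    ∃ (G : ModuleCat.{u} R) (f : ↥G →ₗ[R] ↥M), IsGKDimZero R K ↥G ∧ Function.Surjective f ∧
      GKDimLE R K n (ModuleCat.of R ↥(LinearMap.ker f))

/-- The `G_K`-dimension of `M`. -/
def GKDim (R : Type u) [CommRing R] (K M : Type u) [AddCommGroup K] [Module R K]
    [AddCommGroup M] [Module R M] : ℕ∞ :=
  sInf {n : ℕ∞ | ∃ k : ℕ, n = k ∧ GKDimLE R K k (ModuleCat.of R M)}

/-- The grade of a module, `gr_R(M) = grade(Ann_R(M), R) = inf{i | Ext^i(R/Ann M, R) ≠ 0}`. -/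
def grAnn (R : Type u) [CommRing R] (M : Type u) [AddCommGroup M] [Module R M] : ℕ∞ :=
  egrade R (R ⧸ Module.annihilator R M)

/-- The grade of an ideal, `grade(I) = inf{i | Ext^i(R/I, R) ≠ 0}`. -/
def gradeI (R : Type u) [CommRing R] (I : Ideal R) : ℕ∞ :=
  egrade R (R ⧸ I)

/-- The ideal `I` is `G_K`-Gorenstein: `R/I` is `G_K`-perfect and `Ext^{gr I}(R/I, K)` is
cyclic. -/
def IsGKGorensteinIdeal (R : Type u) [CommRing R] (K : Type u) [AddCommGroup K] [Module R K]
    (I : Ideal R) : Prop :=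
  ∃ n : ℕ, grAnn R (R ⧸ I) = (n : ℕ∞) ∧ GKDim R K (R ⧸ I) = (n : ℕ∞) ∧
    ∃ x : extM R n (R ⧸ I) K, Submodule.span R {x} = ⊤

end

/-!
Localizing away from `m` kills the kernel of `M → M**` and the modules `Ext^i(M, R)` and
`Ext^i(λM, R)`, so each of them has depth zero as soon as it is nonzero.

`λM` is the image of `P₀* → P₁*`, so it always has depth at least `min (rgr M) (depth R)`. Hence
a linked module has positive depth. Conversely, positive depth makes `M → M**` injective, and for
stable `M` the map `P₀* → λM` is a projective cover with kernel `M*`, which identifies `λλM` with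
the image of `M → M**`.

If `n = rgr M ≤ depth R`, then `0 → λM → P₁* → ⋯ → Pₙ*` is exact with a cokernel containing
`Ext^n(M, R) ≠ 0`, hence of depth zero, and counting depths gives `depth λM = n`. The same applies
to `λM`, with `λλM ≅ M`. The required bounds on `rgr M` and `rgr (λM)` follow from
`rgr M + depth M ≤ depth R` for `M` of finite positive G-dimension. By induction on a resolution
this reduces to a sequence `0 → X → Y → M → 0` with `X`, `Y` of G-dimension zero: for
`n = depth R` and `k = R / m` every linear map `X* → Ext^n(k, R)` comes from `Ext^n(k, X)`, so
`X → Y`, not being surjective on duals, is not injective on `Ext^n(k, -)`, and `depth M < n`.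
-/

universe u

section ExtVanishing

variable {R : Type u} [CommRing R]
variable {K X Y Z : Type u} [AddCommGroup K] [Module R K] [AddCommGroup X] [Module R X]
  [AddCommGroup Y] [Module R Y] [AddCommGroup Z] [Module R Z]

/-- The vanishing of `Ext^n_R(X, Y)`, stated for `Abelian.Ext`, which carries the long exact
sequences and the Yoneda product; `subsingleton_extM_iff` compares it with the derived functor. -/
def ExtVanishes (R : Type u) [CommRing R] (n : ℕ) (X Y : Type u) [AddCommGroup X] [Module R X]
    [AddCommGroup Y] [Module R Y] : Prop :=
  Subsingleton (Abelian.Ext.{u} (ModuleCat.of R X) (ModuleCat.of R Y) n)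

theorem subsingleton_ext_zero_iff (X Y : ModuleCat.{u} R) (F : ProjectiveResolution X) :
    Subsingleton (((Ext R (ModuleCat.{u} R) 0).obj (Opposite.op X)).obj Y) ↔
      ∀ f : F.complex.X 0 ⟶ Y, F.complex.d 1 0 ≫ f = 0 → f = 0 := by
  rw [← ModuleCat.isZero_iff_subsingleton, (F.isoExt (R := R) 0 Y).isZero_iff,
    ← HomologicalComplex.exactAt_iff_isZero_homology,
    HomologicalComplex.exactAt_iff' _ 0 0 1 (by simp) (by simp),
    ShortComplex.moduleCat_exact_iff]
  have hd : (F.complex.linearYonedaObj R Y).d 0 0 = 0 :=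
    HomologicalComplex.shape _ _ _ (by simp)
  refine forall₂_congr fun f _ => ⟨?_, fun hf => ⟨0, (map_zero _).trans hf.symm⟩⟩
  rintro ⟨g, rfl⟩
  change ((F.complex.linearYonedaObj R Y).d 0 0).hom g = 0
  rw [hd]
  rfl

theorem subsingleton_ext_succ_iff (n : ℕ) (X Y : ModuleCat.{u} R) (F : ProjectiveResolution X) :
    Subsingleton (((Ext R (ModuleCat.{u} R) (n + 1)).obj (Opposite.op X)).obj Y) ↔
      ∀ f : F.complex.X (n + 1) ⟶ Y, F.complex.d (n + 2) (n + 1) ≫ f = 0 →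
        ∃ g : F.complex.X n ⟶ Y, F.complex.d (n + 1) n ≫ g = f := by
  rw [← ModuleCat.isZero_iff_subsingleton, (F.isoExt (R := R) (n + 1) Y).isZero_iff,
    ← HomologicalComplex.exactAt_iff_isZero_homology,
    HomologicalComplex.exactAt_iff' _ n (n + 1) (n + 2) (by simp) (by simp),
    ShortComplex.moduleCat_exact_iff]
  rfl

theorem subsingleton_abelianExt_zero_iff (X Y : ModuleCat.{u} R) (F : ProjectiveResolution X) :
    Subsingleton (Abelian.Ext.{u} X Y 0) ↔
      ∀ f : F.complex.X 0 ⟶ Y, F.complex.d 1 0 ≫ f = 0 → f = 0 := by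
  rw [Abelian.Ext.addEquiv₀.subsingleton_congr]
  have hπ : F.complex.d 1 0 ≫ F.π.f 0 = 0 := F.complex_d_comp_π_f_zero
  constructor
  · intro _ f hf
    obtain ⟨l, hl⟩ := F.exact₀.desc' f hf
    have hl0 : l = 0 := Subsingleton.elim (α := X ⟶ Y) l 0
    rw [← hl, hl0]
    exact Limits.comp_zero
  · refine fun h => subsingleton_of_forall_eq 0 fun f => ?_
    have hf : F.complex.d 1 0 ≫ F.π.f 0 ≫ f = 0 :=
      (Category.assoc _ _ _).symm.trans ((congrArg (· ≫ f) hπ).trans Limits.zero_comp)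
    exact (cancel_epi (F.π.f 0)).1 ((h _ hf).trans Limits.comp_zero.symm)

theorem subsingleton_abelianExt_succ_iff (n : ℕ) (X Y : ModuleCat.{u} R)
    (F : ProjectiveResolution X) :
    Subsingleton (Abelian.Ext.{u} X Y (n + 1)) ↔
      ∀ f : F.complex.X (n + 1) ⟶ Y, F.complex.d (n + 2) (n + 1) ≫ f = 0 →
        ∃ g : F.complex.X n ⟶ Y, F.complex.d (n + 1) n ≫ g = f := by
  constructor
  · intro _ f hf
    rw [← F.extMk_eq_zero_iff f (n + 2) rfl hf n rfl]
    exact Subsingleton.elim _ _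
  · refine fun h => subsingleton_of_forall_eq 0 fun x => ?_
    obtain ⟨f, hf, rfl⟩ := F.extMk_surjective x (n + 2) rfl
    exact (F.extMk_eq_zero_iff f (n + 2) rfl hf n rfl).2 (h f hf)

theorem subsingleton_extM_iff {n : ℕ} : Subsingleton (extM R n X Y) ↔ ExtVanishes R n X Y := by
  let F := projectiveResolution (ModuleCat.of R X)
  cases n with
  | zero =>
    exact (subsingleton_ext_zero_iff _ _ F).trans (subsingleton_abelianExt_zero_iff _ _ F).symm
  | succ n =>
    exact (subsingleton_ext_succ_iff n _ _ F).trans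
      (subsingleton_abelianExt_succ_iff n _ _ F).symm

theorem extVanishes_iff {n : ℕ} : ExtVanishes R n X Y ↔
    ∀ x : Abelian.Ext.{u} (ModuleCat.of R X) (ModuleCat.of R Y) n, x = 0 :=
  ⟨fun h _ => @Subsingleton.elim _ h _ _, subsingleton_of_forall_eq 0⟩

theorem extVanishes_zero_iff : ExtVanishes R 0 X Y ↔ ∀ f : X →ₗ[R] Y, f = 0 := by
  unfold ExtVanishes
  rw [Abelian.Ext.addEquiv₀.subsingleton_congr, ModuleCat.homAddEquiv.subsingleton_congr]
  exact ⟨fun _ _ => Subsingleton.elim _ _, subsingleton_of_forall_eq 0⟩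

theorem ExtVanishes.of_projective [Module.Projective R X] (n : ℕ) :
    ExtVanishes R (n + 1) X Y :=
  extVanishes_iff.2 fun _ => Abelian.Ext.eq_zero_of_projective _

/-- The map `f_* : Ext^n_R(K, X) → Ext^n_R(K, Y)` induced by `f : X → Y`, as a linear function
of `f`. -/
noncomputable def extMap (K : Type u) [AddCommGroup K] [Module R K] (n : ℕ) :
    (X →ₗ[R] Y) →ₗ[R] Abelian.Ext.{u} (ModuleCat.of R K) (ModuleCat.of R X) n →ₗ[R]
      Abelian.Ext.{u} (ModuleCat.of R K) (ModuleCat.of R Y) n where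
  toFun f := (Abelian.Ext.mk₀ (ModuleCat.ofHom f)).postcompOfLinear R _ (add_zero n)
  map_add' f g := by
    ext x
    simp [ModuleCat.ofHom_add, Abelian.Ext.mk₀_add]
  map_smul' r f := by
    ext x
    have hrf : ModuleCat.ofHom (r • f) = r • ModuleCat.ofHom f := rfl
    simp [hrf, Abelian.Ext.mk₀_smul]

section ExtMap

variable {n : ℕ} (x : Abelian.Ext.{u} (ModuleCat.of R K) (ModuleCat.of R X) n)

theorem extMap_apply (f : X →ₗ[R] Y) :
    extMap K n f x = x.comp (Abelian.Ext.mk₀ (ModuleCat.ofHom f)) (add_zero n) :=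
  rfl

theorem extMap_comp_apply (f : X →ₗ[R] Y) (g : Y →ₗ[R] Z) :
    extMap K n (g ∘ₗ f) x = extMap K n g (extMap K n f x) := by
  rw [extMap_apply, extMap_apply, extMap_apply, ModuleCat.ofHom_comp,
    ← Abelian.Ext.mk₀_comp_mk₀, Abelian.Ext.comp_assoc_of_third_deg_zero]

theorem extMap_id_apply : extMap K n LinearMap.id x = x := by
  rw [extMap_apply, ModuleCat.ofHom_id, Abelian.Ext.comp_mk₀_id]

theorem extMap_smulRight_apply (φ : Module.Dual R X) (y : Y) :
    extMap K n (φ.smulRight y) x =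
      extMap K n (LinearMap.toSpanSingleton R Y y) (extMap K n φ x) := by
  rw [← extMap_comp_apply]
  rfl

end ExtMap

theorem ExtVanishes.of_linearEquiv_right {n : ℕ} (e : Y ≃ₗ[R] Z) (h : ExtVanishes R n X Y) :
    ExtVanishes R n X Z := by
  rw [extVanishes_iff] at h ⊢
  intro x
  rw [← extMap_id_apply x, ← e.comp_symm, extMap_comp_apply, h (extMap X n _ x), map_zero]

/-- `0 → X → Y → Z → 0` is an exact sequence of modules. -/
structure IsShortExact (f : X →ₗ[R] Y) (g : Y →ₗ[R] Z) : Prop where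
  injective : Function.Injective f
  exact : Function.Exact f g
  surjective : Function.Surjective g

namespace IsShortExact

theorem ker_subtype {g : Y →ₗ[R] Z} (hg : Function.Surjective g) :
    IsShortExact (LinearMap.ker g).subtype g :=
  ⟨Subtype.val_injective, LinearMap.exact_subtype_ker_map g, hg⟩

theorem subtype_mkQ (N : Submodule R Y) : IsShortExact N.subtype N.mkQ :=
  ⟨Subtype.val_injective, LinearMap.exact_subtype_mkQ N, N.mkQ_surjective⟩

theorem range_rangeRestrict {f : X →ₗ[R] Y} {g : Y →ₗ[R] Z} (h : Function.Exact f g) :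
    IsShortExact (LinearMap.range f).subtype g.rangeRestrict where
  injective := Subtype.val_injective
  exact := by
    rw [LinearMap.exact_iff, LinearMap.ker_rangeRestrict, Submodule.range_subtype,
      h.linearMap_ker_eq]
  surjective := g.surjective_rangeRestrict

variable {f : X →ₗ[R] Y} {g : Y →ₗ[R] Z}

theorem comp_linearEquiv (h : IsShortExact f g) (e : K ≃ₗ[R] X) :
    IsShortExact (f ∘ₗ e.toLinearMap) g where
  injective := h.injective.comp e.injective
  exact := by
    rw [LinearMap.exact_iff, LinearMap.range_comp, e.range, Submodule.map_top,
      h.exact.linearMap_ker_eq]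
  surjective := h.surjective

/-- The identification of the submodule `X` of `Y` with the kernel of `Y → Z`. -/
noncomputable def equivKer (h : IsShortExact f g) : X ≃ₗ[R] LinearMap.ker g :=
  (LinearEquiv.ofInjective f h.injective).trans
    (LinearEquiv.ofEq _ _ h.exact.linearMap_ker_eq.symm)

theorem apply_equivKer_symm (h : IsShortExact f g) (y : LinearMap.ker g) :
    f (h.equivKer.symm y) = y :=
  congrArg Subtype.val (h.equivKer.apply_symm_apply y)

theorem shortExact (h : IsShortExact f g) :
    (ShortComplex.mk (ModuleCat.ofHom f) (ModuleCat.ofHom g)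
      (by ext x; exact h.exact.apply_apply_eq_zero x)).ShortExact where
  exact := (ShortComplex.ShortExact.moduleCat_exact_iff_function_exact _).2 h.exact
  mono_f := (ModuleCat.mono_iff_injective _).2 h.injective
  epi_g := (ModuleCat.epi_iff_surjective _).2 h.surjective

theorem exact_extMap (h : IsShortExact f g) (n : ℕ) :
    Function.Exact (extMap K n f) (extMap K n g) := by
  refine fun x => ⟨Abelian.Ext.covariant_sequence_exact₂ _ h.shortExact x, ?_⟩
  rintro ⟨y, rfl⟩
  rw [← extMap_comp_apply, h.exact.linearMap_comp_eq_zero, map_zero, LinearMap.zero_apply]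

theorem extMap_zero_injective (h : IsShortExact f g) : Function.Injective (extMap K 0 f) := by
  rw [injective_iff_map_eq_zero]
  intro x hx
  obtain ⟨φ, rfl⟩ := (Abelian.Ext.mk₀_bijective _ _).2 x
  rw [extMap_apply, Abelian.Ext.mk₀_comp_mk₀] at hx
  have : Mono (ModuleCat.ofHom f) := (ModuleCat.mono_iff_injective _).2 h.injective
  rw [Abelian.Ext.mk₀_eq_zero_iff] at hx ⊢
  exact Limits.zero_of_comp_mono _ hx

theorem extMap_succ_injective (h : IsShortExact f g) {n : ℕ} (hZ : ExtVanishes R n K Z) :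
    Function.Injective (extMap K (n + 1) f) := by
  rw [injective_iff_map_eq_zero]
  intro x hx
  obtain ⟨y, rfl⟩ := Abelian.Ext.covariant_sequence_exact₁ _ h.shortExact x hx rfl
  rw [extVanishes_iff.1 hZ y, Abelian.Ext.zero_comp]

theorem extVanishes_to_left_zero (h : IsShortExact f g) (hY : ExtVanishes R 0 K Y) :
    ExtVanishes R 0 K X :=
  extVanishes_iff.2 fun _ =>
    h.extMap_zero_injective ((extVanishes_iff.1 hY _).trans (map_zero _).symm)

theorem extVanishes_to_left_succ (h : IsShortExact f g) {n : ℕ} (hY : ExtVanishes R (n + 1) K Y)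
    (hZ : ExtVanishes R n K Z) : ExtVanishes R (n + 1) K X :=
  extVanishes_iff.2 fun _ =>
    h.extMap_succ_injective hZ ((extVanishes_iff.1 hY _).trans (map_zero _).symm)

theorem extVanishes_to_right (h : IsShortExact f g) {n : ℕ} (hY : ExtVanishes R n K Y)
    (hX : ExtVanishes R (n + 1) K X) : ExtVanishes R n K Z := by
  rw [extVanishes_iff] at *
  intro x
  obtain ⟨y, rfl⟩ := Abelian.Ext.covariant_sequence_exact₃ _ h.shortExact x rfl (hX _)
  rw [hY y, Abelian.Ext.zero_comp]

theorem extVanishes_from_left (h : IsShortExact f g) {n : ℕ} (hY : ExtVanishes R n Y K)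
    (hZ : ExtVanishes R (n + 1) Z K) : ExtVanishes R n X K := by
  rw [extVanishes_iff] at *
  intro x
  obtain ⟨y, rfl⟩ := Abelian.Ext.contravariant_sequence_exact₁ h.shortExact _ x
    (Nat.add_comm 1 n) (hZ _)
  rw [hY y]
  exact Abelian.Ext.comp_zero _ _ _ _ _

theorem extVanishes_from_right_succ (h : IsShortExact f g) {n : ℕ}
    (hY : ExtVanishes R (n + 1) Y K) (hX : ExtVanishes R n X K) : ExtVanishes R (n + 1) Z K := by
  rw [extVanishes_iff] at *
  intro x
  obtain ⟨y, rfl⟩ := Abelian.Ext.contravariant_sequence_exact₃ h.shortExact _ x (hY _)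
    (Nat.add_comm 1 n)
  rw [hX y]
  exact Abelian.Ext.comp_zero _ _ _ _ _

theorem exists_comp_eq_of_extVanishes_one (h : IsShortExact f g) (hZ : ExtVanishes R 1 Z K)
    (φ : X →ₗ[R] K) : ∃ ψ : Y →ₗ[R] K, ψ ∘ₗ f = φ := by
  obtain ⟨y, hy⟩ := Abelian.Ext.contravariant_sequence_exact₁ h.shortExact _
    (Abelian.Ext.mk₀ (ModuleCat.ofHom φ)) (Nat.add_comm 1 0) (extVanishes_iff.1 hZ _)
  obtain ⟨ψ, rfl⟩ := (Abelian.Ext.mk₀_bijective _ _).2 y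
  rw [Abelian.Ext.mk₀_comp_mk₀] at hy
  exact ⟨ψ.hom, congrArg ModuleCat.Hom.hom ((Abelian.Ext.mk₀_bijective _ _).1 hy)⟩

theorem extVanishes_one_of_exists_comp_eq (h : IsShortExact f g) (hY : ExtVanishes R 1 Y K)
    (hext : ∀ φ : X →ₗ[R] K, ∃ ψ : Y →ₗ[R] K, ψ ∘ₗ f = φ) : ExtVanishes R 1 Z K := by
  rw [extVanishes_iff] at *
  intro x
  obtain ⟨y, rfl⟩ := Abelian.Ext.contravariant_sequence_exact₃ h.shortExact _ x (hY _)
    (Nat.add_comm 1 0)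
  obtain ⟨φ, rfl⟩ := (Abelian.Ext.mk₀_bijective _ _).2 y
  obtain ⟨ψ, hψ⟩ := hext φ.hom
  obtain rfl : ModuleCat.ofHom f ≫ ModuleCat.ofHom ψ = φ := ModuleCat.hom_ext hψ
  rw [← Abelian.Ext.mk₀_comp_mk₀]
  exact h.shortExact.extClass_comp_assoc _

theorem dualMap (h : IsShortExact f g) (hf : Function.Surjective f.dualMap) :
    IsShortExact g.dualMap f.dualMap where
  injective := LinearMap.dualMap_injective_of_surjective h.surjective
  exact := LinearMap.exact_lcomp_of_exact_of_surjective _ h.exact h.surjective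
  surjective := hf

end IsShortExact

end ExtVanishing

section Depth

variable {R : Type u} [CommRing R] {I : Ideal R}
variable {X Y Z : Type u} [AddCommGroup X] [Module R X] [AddCommGroup Y] [Module R Y]
  [AddCommGroup Z] [Module R Z]

theorem natCast_le_sInf_natCast_iff {p : ℕ → Prop} {n : ℕ} :
    (n : ℕ∞) ≤ sInf {x : ℕ∞ | ∃ k : ℕ, x = k ∧ p k} ↔ ∀ k < n, ¬ p k := by
  rw [le_sInf_iff]
  refine ⟨fun h k hkn hk => hkn.not_ge (Nat.cast_le.1 (h k ⟨k, rfl, hk⟩)), ?_⟩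
  rintro h _ ⟨k, rfl, hk⟩
  exact Nat.cast_le.2 (not_lt.1 fun hkn => h k hkn hk)

theorem natCast_le_edepth_iff {n : ℕ} :
    (n : ℕ∞) ≤ edepth R I X ↔ ∀ j < n, ExtVanishes R j (R ⧸ I) X := by
  simp only [edepth, natCast_le_sInf_natCast_iff, not_not, subsingleton_extM_iff]

theorem not_extVanishes_of_edepth_eq {n : ℕ} (hn : edepth R I X = n) :
    ¬ ExtVanishes R n (R ⧸ I) X := by
  intro h
  have hlt : ((n + 1 : ℕ) : ℕ∞) ≤ edepth R I X := natCast_le_edepth_iff.2 fun j hj => by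
    obtain hj | rfl := (Nat.lt_succ_iff.1 hj).lt_or_eq
    · exact natCast_le_edepth_iff.1 hn.ge j hj
    · exact h
  rw [hn, Nat.cast_le] at hlt
  omega

theorem natCast_le_rgr_iff {n : ℕ} :
    (n : ℕ∞) ≤ rgr R X ↔ ∀ j, j + 1 < n → ExtVanishes R (j + 1) X R := by
  simp only [rgr, natCast_le_sInf_natCast_iff, not_and, not_not, subsingleton_extM_iff]
  refine ⟨fun h j hj => h _ hj j.succ_pos, fun h k hk hk0 => ?_⟩
  obtain ⟨j, rfl⟩ := Nat.exists_eq_succ_of_ne_zero hk0.ne'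
  exact h j hk

theorem not_extVanishes_of_rgr_eq {n : ℕ} (hn : rgr R X = (n + 1 : ℕ)) :
    ¬ ExtVanishes R (n + 1) X R := by
  intro h
  have hlt : ((n + 2 : ℕ) : ℕ∞) ≤ rgr R X := natCast_le_rgr_iff.2 fun j hj => by
    obtain hj | hj := (Nat.lt_succ_iff.1 hj).lt_or_eq
    · exact natCast_le_rgr_iff.1 hn.ge j hj
    · rwa [hj]
  rw [hn, Nat.cast_le] at hlt
  omega

theorem one_le_rgr : 1 ≤ rgr R X := by
  rw [← Nat.cast_one, natCast_le_rgr_iff]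
  exact fun j hj => absurd hj (by omega)

theorem edepth_le_of_linearEquiv (e : X ≃ₗ[R] Y) : edepth R I X ≤ edepth R I Y := by
  rw [← ENat.forall_natCast_le_iff_le]
  intro n hn
  rw [natCast_le_edepth_iff] at hn ⊢
  exact fun j hj => (hn j hj).of_linearEquiv_right e

theorem edepth_eq_of_linearEquiv (e : X ≃ₗ[R] Y) : edepth R I X = edepth R I Y :=
  (edepth_le_of_linearEquiv e).antisymm (edepth_le_of_linearEquiv e.symm)

namespace IsShortExact

variable {f : X →ₗ[R] Y} {g : Y →ₗ[R] Z}

theorem extMap_injective (h : IsShortExact f g) {n : ℕ} (hn : (n : ℕ∞) ≤ edepth R I Z) :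
    Function.Injective (extMap (R ⧸ I) n f) := by
  cases n with
  | zero => exact h.extMap_zero_injective
  | succ n => exact h.extMap_succ_injective (natCast_le_edepth_iff.1 hn n n.lt_succ_self)

theorem min_edepth_le_edepth_left (h : IsShortExact f g) :
    min (edepth R I Y) (edepth R I Z + 1) ≤ edepth R I X := by
  rw [← ENat.forall_natCast_le_iff_le]
  intro n hn
  obtain ⟨hY, hZ⟩ := le_min_iff.1 hn
  rw [natCast_le_edepth_iff] at hY ⊢
  rintro (_ | j) hj
  · exact h.extVanishes_to_left_zero (hY 0 hj)
  · refine h.extVanishes_to_left_succ (hY _ hj) (natCast_le_edepth_iff.1 ?_ j j.lt_succ_self)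
    have : ((j + 1 : ℕ) : ℕ∞) + 1 ≤ edepth R I Z + 1 := le_trans (mod_cast hj) hZ
    exact (ENat.add_le_add_iff_right ENat.one_ne_top).1 this

theorem min_edepth_le_edepth_right_add_one (h : IsShortExact f g) :
    min (edepth R I Y + 1) (edepth R I X) ≤ edepth R I Z + 1 := by
  rw [← ENat.forall_natCast_le_iff_le]
  rintro (_ | n) hn
  · simp
  obtain ⟨hY, hX⟩ := le_min_iff.1 hn
  rw [Nat.cast_succ, ENat.add_le_add_iff_right ENat.one_ne_top, natCast_le_edepth_iff] at hY ⊢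
  rw [natCast_le_edepth_iff] at hX
  exact fun j hj => h.extVanishes_to_right (hY j hj) (hX _ (Nat.succ_lt_succ hj))

end IsShortExact

theorem edepth_eq_zero_iff : edepth R I X = 0 ↔ ∃ x : X, x ≠ 0 ∧ ∀ a ∈ I, a • x = 0 := by
  have hpos : edepth R I X ≠ 0 ↔ ∀ f : (R ⧸ I) →ₗ[R] X, f = 0 := by
    rw [← Order.one_le_iff_ne_zero, ← Nat.cast_one, natCast_le_edepth_iff, ← extVanishes_zero_iff]
    exact ⟨fun h => h 0 one_pos, fun h j hj => by rwa [Nat.lt_one_iff.1 hj]⟩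
  rw [← not_iff_not, ← ne_eq, hpos]
  push Not
  constructor
  · intro h x hx
    by_contra! hI
    have hle : I ≤ LinearMap.ker (LinearMap.toSpanSingleton R X x) := fun a ha => hI a ha
    refine hx ?_
    have hlift : I.liftQ _ hle (Submodule.Quotient.mk 1) = 0 :=
      LinearMap.congr_fun (h _) _
    rwa [Submodule.liftQ_apply, LinearMap.toSpanSingleton_apply, one_smul] at hlift
  · intro h f
    ext
    by_contra hf
    obtain ⟨a, ha, hne⟩ := h _ hf
    refine hne ?_
    have hmk : I.mkQ a = 0 := (Submodule.Quotient.mk_eq_zero I).2 ha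
    rw [← map_smul, smul_eq_mul, mul_one, LinearMap.comp_apply, hmk, map_zero]

theorem gammaTorsion_eq_bot_iff : gammaTorsion R I X = ⊥ ↔ edepth R I X ≠ 0 := by
  rw [ne_eq, edepth_eq_zero_iff, Submodule.eq_bot_iff]
  push Not
  constructor
  · intro h x hx
    by_contra! hI
    exact hx (h x ⟨1, by simpa using hI⟩)
  · rintro h x ⟨n, hn⟩
    induction n generalizing x with
    | zero => simpa using hn 1 (by simp)
    | succ n ih =>
      by_contra hx
      obtain ⟨b, hb, hbx⟩ := h x hx
      refine hbx (ih (b • x) fun a ha => ?_)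
      rw [← mul_smul]
      exact hn _ (Ideal.mul_mem_mul ha hb)

theorem edepth_maximalIdeal_eq_zero_of_locally_zero [IsNoetherianRing R] [IsLocalRing R] {x : X}
    (hx : x ≠ 0) (hloc : ∀ p : Ideal R, p.IsPrime → p ≠ IsLocalRing.maximalIdeal R →
      ∃ s ∉ p, s • x = 0) : edepth R (IsLocalRing.maximalIdeal R) X = 0 := by
  obtain ⟨p, hp, hle⟩ := exists_le_isAssociatedPrime_of_isNoetherianRing R x hx
  obtain ⟨hprime, y, hy⟩ := (isAssociatedPrime_iff ..).1 hp
  by_cases hpm : p = IsLocalRing.maximalIdeal R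
  · refine edepth_eq_zero_iff.2 ⟨y, ?_, fun a ha => ?_⟩
    · rintro rfl
      exact hprime.ne_top (by simp [hy, Ideal.eq_top_iff_one])
    · rw [← hpm, hy] at ha
      simpa using ha
  · obtain ⟨s, hs, hsx⟩ := hloc p hprime hpm
    exact absurd (hle (by simpa using hsx)) hs

theorem rdepth_le_height [IsNoetherianRing R] [IsLocalRing R] :
    rdepth R ≤ (IsLocalRing.maximalIdeal R).height := by
  rw [← ENat.forall_natCast_le_iff_le]
  intro n hn
  obtain ⟨rs, hlen, hmem, hreg⟩ := ModuleCat.exists_isRegular_of_exists_subsingleton_ext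
    (IsLocalRing.maximalIdeal R) n (ModuleCat.of R R)
    (by simpa using (Ideal.IsPrime.ne_top inferInstance).lt_top)
    (ModuleCat.of R (R ⧸ IsLocalRing.maximalIdeal R))
    (by rw [Module.support_eq_zeroLocus, Ideal.annihilator_quotient])
    (natCast_le_edepth_iff.1 hn)
  have hdim := ringKrullDim_add_length_eq_ringKrullDim_of_isRegular rs hreg
  rw [← IsLocalRing.maximalIdeal_height_eq_ringKrullDim (R := R), hlen] at hdim
  have : Nontrivial (R ⧸ Ideal.ofList rs) := Ideal.Quotient.nontrivial_iff.2 fun htop =>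
    Ideal.IsPrime.ne_top (I := IsLocalRing.maximalIdeal R) inferInstance
      (top_le_iff.1 (htop ▸ Ideal.span_le.2 hmem))
  have hle : (n : WithBot ℕ∞) ≤ (IsLocalRing.maximalIdeal R).height :=
    hdim ▸ le_add_of_nonneg_left ringKrullDim_nonneg_of_nontrivial
  exact WithBot.coe_le_coe.1 hle

theorem rdepth_lt_top [IsNoetherianRing R] [IsLocalRing R] : rdepth R < ⊤ :=
  rdepth_le_height.trans_lt (Ideal.height_lt_top Ideal.IsPrime.ne_top')

section CochainComplex

variable {C : ℕ → Type u} [∀ i, AddCommGroup (C i)] [∀ i, Module R (C i)]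
  (δ : ∀ i, C i →ₗ[R] C (i + 1))

theorem min_le_edepth_range {d : ℕ∞} (hC : ∀ i, d ≤ edepth R I (C i)) (n i : ℕ)
    (hδ : ∀ l, i ≤ l → l < i + n → Function.Exact (δ l) (δ (l + 1))) :
    min d (n + 1) ≤ edepth R I (LinearMap.range (δ i)) := by
  induction n generalizing i with
  | zero =>
    refine le_trans (min_le_min (hC _) ?_)
      (IsShortExact.subtype_mkQ (LinearMap.range (δ i))).min_edepth_le_edepth_left
    simp
  | succ n ih =>
    have hrange := ih (i + 1) fun l hl hl' => hδ l (by omega) (by omega)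
    have hses := IsShortExact.range_rangeRestrict (hδ i le_rfl (by omega))
    refine le_trans ?_ (hses.min_edepth_le_edepth_left (I := I))
    refine le_min ((min_le_left _ _).trans (hC _)) ?_
    refine le_trans ?_ (add_le_add_left hrange 1)
    rw [min_add]
    exact min_le_min le_self_add (by simp)

theorem edepth_range_le_of_edepth_coker_eq_zero {n i m : ℕ} (him : i + n = m)
    (hC : ∀ i, (n : ℕ∞) < edepth R I (C i))
    (hδ : ∀ l, i ≤ l → l < m → Function.Exact (δ l) (δ (l + 1)))
    (hm : edepth R I (C (m + 1) ⧸ LinearMap.range (δ m)) = 0) :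
    edepth R I (LinearMap.range (δ i)) ≤ n + 1 := by
  induction n generalizing i with
  | zero =>
    obtain rfl : i = m := him
    have hses := IsShortExact.subtype_mkQ (LinearMap.range (δ i))
    have hle := hm ▸ hses.min_edepth_le_edepth_right_add_one (I := I)
    refine (min_le_iff.1 hle).resolve_left (not_le.2 ?_)
    exact (ENat.add_lt_add_iff_right ENat.one_ne_top).2 (hC (i + 1))
  | succ n ih =>
    have hrange := ih (i := i + 1) (by omega)
      (fun l => lt_of_le_of_lt (by simp) (hC l)) fun l hl hl' => hδ l (by omega) hl'
    have hses := IsShortExact.range_rangeRestrict (hδ i le_rfl (by omega))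
    have hle := hses.min_edepth_le_edepth_right_add_one (I := I)
    have hle' := hle.trans (add_le_add_left hrange 1)
    rw [← Nat.cast_succ] at hle'
    refine (min_le_iff.1 hle').resolve_left (not_le.2 ?_)
    exact (ENat.add_lt_add_iff_right ENat.one_ne_top).2 (hC (i + 1))

end CochainComplex

end Depth

section Projective

variable {R : Type u} [CommRing R] {I : Ideal R}
variable {X Y P : Type u} [AddCommGroup X] [Module R X] [AddCommGroup Y] [Module R Y]
  [AddCommGroup P] [Module R P]

theorem exists_dual_generators (R P : Type u) [CommRing R] [AddCommGroup P] [Module R P]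
    [Module.Finite R P] [Module.Projective R P] :
    ∃ (n : ℕ) (φ : Fin n → Module.Dual R P) (p : Fin n → P), ∀ x, ∑ i, φ i x • p i = x := by
  obtain ⟨n, f, g, -, -, hfg⟩ := Module.Finite.exists_comp_eq_id_of_projective R P
  refine ⟨n, fun i => LinearMap.proj i ∘ₗ g, fun i => f fun j => if i = j then 1 else 0,
    fun x => ?_⟩
  exact (f.pi_apply_eq_sum_univ (g x)).symm.trans (LinearMap.congr_fun hfg x)

theorem mem_smul_top_of_forall_dual_mem [Module.Finite R P] [Module.Projective R P] {x : P}
    (hx : ∀ φ : Module.Dual R P, φ x ∈ I) : x ∈ I • (⊤ : Submodule R P) := by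
  obtain ⟨n, φ, p, hφp⟩ := exists_dual_generators R P
  rw [← hφp x]
  exact Submodule.sum_mem _ fun i _ => Submodule.smul_mem_smul (hx _) trivial

theorem ext_eq_zero_of_forall_dual [Module.Finite R P] [Module.Projective R P] {n : ℕ}
    {x : Abelian.Ext.{u} (ModuleCat.of R X) (ModuleCat.of R P) n}
    (hx : ∀ φ : Module.Dual R P, extMap X n φ x = 0) : x = 0 := by
  obtain ⟨m, φ, p, hφp⟩ := exists_dual_generators R P
  have hid : ∑ i, (φ i).smulRight (p i) = LinearMap.id := by
    ext x
    simpa using hφp x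
  rw [← extMap_id_apply x, ← hid, map_sum, LinearMap.sum_apply]
  refine Finset.sum_eq_zero fun i _ => ?_
  rw [extMap_smulRight_apply, hx, map_zero]

theorem exists_ext_dual_extMap_eval_eq [Module.Finite R P] [Module.Projective R P] {n : ℕ}
    (h : P →ₗ[R] Abelian.Ext.{u} (ModuleCat.of R X) (ModuleCat.of R R) n) :
    ∃ y : Abelian.Ext.{u} (ModuleCat.of R X) (ModuleCat.of R (Module.Dual R P)) n,
      ∀ p, extMap X n (Module.Dual.eval R P p) y = h p := by
  obtain ⟨m, φ, p, hφp⟩ := exists_dual_generators R P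
  refine ⟨∑ i, extMap X n (LinearMap.toSpanSingleton R _ (φ i)) (h (p i)), fun q => ?_⟩
  have hcomp (i : Fin m) : Module.Dual.eval R P q ∘ₗ LinearMap.toSpanSingleton R _ (φ i) =
      φ i q • LinearMap.id := by
    ext
    simp
  simp only [map_sum, ← extMap_comp_apply, hcomp, map_smul, LinearMap.smul_apply,
    extMap_id_apply]
  conv_rhs => rw [← hφp q]
  simp only [map_sum, map_smul]

theorem edepth_le_edepth_of_projective [Module.Finite R P] [Module.Projective R P] :
    edepth R I R ≤ edepth R I P := by
  rw [← ENat.forall_natCast_le_iff_le]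
  intro n hn
  rw [natCast_le_edepth_iff] at hn ⊢
  exact fun j hj => extVanishes_iff.2 fun x =>
    ext_eq_zero_of_forall_dual fun φ => extVanishes_iff.1 (hn j hj) _

/-- A projective resolution of `X`, given by linear maps of modules. -/
structure ProjRes (R : Type u) [CommRing R] (X : Type u) [AddCommGroup X] [Module R X] where
  P : ℕ → ModuleCat.{u} R
  projective : ∀ i, Module.Projective R (P i)
  d : ∀ i, P (i + 1) →ₗ[R] P i
  ε : P 0 →ₗ[R] X
  surj : Function.Surjective ε
  exact_zero : Function.Exact (d 0) ε
  exact_succ : ∀ i, Function.Exact (d (i + 1)) (d i)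

namespace ProjRes

variable (F : ProjRes R X)

/-- The resolution of the first syzygy `ker ε` obtained by dropping the module `P 0`. -/
def shift : ProjRes R (LinearMap.ker F.ε) where
  P i := F.P (i + 1)
  projective i := F.projective (i + 1)
  d i := F.d (i + 1)
  ε := (F.d 0).codRestrict _ F.exact_zero.apply_apply_eq_zero
  surj := by
    rintro ⟨x, hx⟩
    obtain ⟨y, rfl⟩ := (F.exact_zero x).1 hx
    exact ⟨y, rfl⟩
  exact_zero x := Subtype.ext_iff.trans (F.exact_succ 0 x)
  exact_succ i := F.exact_succ (i + 1)

theorem extVanishes_one_iff : ExtVanishes R 1 X Y ↔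
    Function.Exact (LinearMap.lcomp R Y (F.d 0)) (LinearMap.lcomp R Y (F.d 1)) := by
  have := F.projective 0
  have hker := IsShortExact.ker_subtype F.surj
  have hshift := LinearMap.exact_lcomp_of_exact_of_surjective Y F.shift.exact_zero F.shift.surj
  have hd (ψ : F.P 0 →ₗ[R] Y) :
      (ψ ∘ₗ (LinearMap.ker F.ε).subtype) ∘ₗ F.shift.ε = ψ ∘ₗ F.d 0 := rfl
  constructor
  · refine fun h f => (hshift f).trans ⟨?_, ?_⟩
    · rintro ⟨φ, rfl⟩
      obtain ⟨ψ, rfl⟩ := hker.exists_comp_eq_of_extVanishes_one h φ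
      exact ⟨ψ, rfl⟩
    · rintro ⟨ψ, rfl⟩
      exact ⟨ψ ∘ₗ (LinearMap.ker F.ε).subtype, hd ψ⟩
  · refine fun h => hker.extVanishes_one_of_exists_comp_eq (.of_projective 0) fun φ => ?_
    obtain ⟨ψ, hψ⟩ := (h _).1 ((hshift _).2 ⟨φ, rfl⟩)
    exact ⟨ψ, (LinearMap.cancel_right F.shift.surj).1 ((hd ψ).trans hψ)⟩

theorem extVanishes_succ_iff (n : ℕ) : ExtVanishes R (n + 1) X Y ↔
    Function.Exact (LinearMap.lcomp R Y (F.d n)) (LinearMap.lcomp R Y (F.d (n + 1))) := by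
  induction n generalizing X with
  | zero => exact F.extVanishes_one_iff
  | succ n ih =>
    have := F.projective 0
    have hker := IsShortExact.ker_subtype F.surj
    have hdim : ExtVanishes R (n + 2) X Y ↔ ExtVanishes R (n + 1) (LinearMap.ker F.ε) Y :=
      ⟨hker.extVanishes_from_left (.of_projective n),
        hker.extVanishes_from_right_succ (.of_projective (n + 1))⟩
    exact hdim.trans (ih F.shift)

end ProjRes

namespace MinRes

/-- The projective resolution underlying a minimal one. -/
def toProjRes (F : MinRes R X) : ProjRes R X where
  P := F.P
  projective := F.projective
  d := F.d
  ε := F.ε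
  surj := F.surj
  exact_zero := LinearMap.exact_iff.2 F.exact0.symm
  exact_succ i := LinearMap.exact_iff.2 (F.exact i).symm

/-- The surjection `P₀* → λX`. -/
def lambdaCover (F : MinRes R X) : Module.Dual R (F.P 0) →ₗ[R] F.lambdaMod :=
  (F.d 0).dualMap.rangeRestrict

theorem isShortExact_dual (F : MinRes R X) : IsShortExact F.ε.dualMap F.lambdaCover where
  injective := LinearMap.dualMap_injective_of_surjective F.surj
  exact f := Subtype.ext_iff.trans
    (LinearMap.exact_lcomp_of_exact_of_surjective R F.toProjRes.exact_zero F.surj f)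
  surjective := LinearMap.surjective_rangeRestrict _

theorem exact_dualMap (F : MinRes R X) {n : ℕ} (h : ExtVanishes R (n + 1) X R) :
    Function.Exact (F.d n).dualMap (F.d (n + 1)).dualMap :=
  (F.toProjRes.extVanishes_succ_iff n).1 h

/-- The inclusion `λX → P₁*`. -/
def lambdaInclusion (F : MinRes R X) : F.lambdaMod →ₗ[R] Module.Dual R (F.P 1) :=
  (LinearMap.range (F.d 0).dualMap).subtype

theorem isShortExact_lambdaInclusion (F : MinRes R X) (h : ExtVanishes R 1 X R) :
    IsShortExact (Z := LinearMap.range (F.d 1).dualMap) F.lambdaInclusion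
      (F.d 1).dualMap.rangeRestrict :=
  IsShortExact.range_rangeRestrict (F.exact_dualMap h)

theorem edepth_le_edepth_dual (F : MinRes R X) (i : ℕ) :
    edepth R I R ≤ edepth R I (Module.Dual R (F.P i)) :=
  have := F.finite i
  have := F.projective i
  edepth_le_edepth_of_projective

theorem min_rgr_edepth_le_edepth_lambdaMod (F : MinRes R X) :
    min (rgr R X) (edepth R I R) ≤ edepth R I F.lambdaMod := by
  rw [← ENat.forall_natCast_le_iff_le]
  rintro (_ | n) hn
  · simp
  obtain ⟨hrgr, hdepth⟩ := le_min_iff.1 hn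
  refine le_trans (le_min hdepth (by simp)) (min_le_edepth_range (fun i => (F.d i).dualMap)
    F.edepth_le_edepth_dual n 0 fun l _ hl => F.exact_dualMap ?_)
  exact natCast_le_rgr_iff.1 hrgr l (by omega)

end MinRes

/-- A projective cover of `X` by a finitely generated module. -/
structure ProjCover (R : Type u) [CommRing R] (X : Type u) [AddCommGroup X] [Module R X] where
  P : ModuleCat.{u} R
  projective : Module.Projective R P
  finite : Module.Finite R P
  π : P →ₗ[R] X
  surj : Function.Surjective π
  superfluous : (LinearMap.ker π).IsSuperfluous

/-- The minimal resolution of `X` spliced from a projective cover of `X` and a minimal resolution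
of its kernel. -/
def MinRes.cons (c : ProjCover R X) (H : MinRes R (LinearMap.ker c.π)) : MinRes R X where
  P
    | 0 => c.P
    | i + 1 => H.P i
  projective
    | 0 => c.projective
    | i + 1 => H.projective i
  finite
    | 0 => c.finite
    | i + 1 => H.finite i
  d
    | 0 => (LinearMap.ker c.π).subtype ∘ₗ H.ε
    | i + 1 => H.d i
  ε := c.π
  surj := c.surj
  exact0 := by
    rw [LinearMap.range_comp, LinearMap.range_eq_top.2 H.surj, Submodule.map_subtype_top]
  exact
    | 0 => H.exact0.trans (LinearMap.ker_comp_of_ker_eq_bot _ (Submodule.ker_subtype _)).symm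
    | i + 1 => H.exact i
  min_eps := c.superfluous
  min_d
    | 0 => by
      rw [LinearMap.ker_comp_of_ker_eq_bot _ (Submodule.ker_subtype _)]
      exact H.min_eps
    | i + 1 => H.min_d i

section IsLocalRing

open IsLocalRing

variable [IsLocalRing R]

theorem isSuperfluous_of_le_smul_top [Module.Finite R P] {N : Submodule R P}
    (hN : N ≤ maximalIdeal R • ⊤) : N.IsSuperfluous := by
  intro K hK
  refine top_le_iff.1 (Submodule.le_of_le_smul_of_le_jacobson_bot Module.Finite.fg_top
    (maximalIdeal_le_jacobson ⊥) ?_)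
  rw [← hK]
  exact sup_le le_sup_left ((hN.trans (Submodule.smul_mono le_rfl hK.ge)).trans le_sup_right)

theorem mem_maximalIdeal_of_sum_smul_eq_zero {ι : Type*} [Fintype ι] {v : ι → X}
    (hv : LinearIndependent (ResidueField R)
      fun i => (1 : ResidueField R) ⊗ₜ[R] v i) {r : ι → R}
    (hr : ∑ i, r i • v i = 0) (i : ι) : r i ∈ maximalIdeal R := by
  refine (residue_eq_zero_iff _).1 (Fintype.linearIndependent_iff.1 hv (residue R ∘ r) ?_ i)
  have h := congrArg (TensorProduct.mk R (ResidueField R) X 1) hr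
  rw [map_sum, map_zero] at h
  rw [← h]
  exact Finset.sum_congr rfl fun i _ => ((map_smul (TensorProduct.mk R _ X 1) (r i) (v i))).symm

theorem exists_projCover (R X : Type u) [CommRing R] [IsLocalRing R] [AddCommGroup X]
    [Module R X] [Module.Finite R X] : Nonempty (ProjCover R X) := by
  let b := Module.finBasis (ResidueField R) (TensorProduct R (ResidueField R) X)
  choose v hv using fun i => TensorProduct.mk_surjective R X _ residue_surjective (b i)
  have hind : LinearIndependent (ResidueField R) fun i => (1 : ResidueField R) ⊗ₜ[R] v i := by
    convert b.linearIndependent using 1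
    exact funext hv
  refine ⟨⟨ModuleCat.of R (Fin _ → R), inferInstanceAs (Module.Projective R (Fin _ → R)),
    inferInstanceAs (Module.Finite R (Fin _ → R)), Fintype.linearCombination R v, ?_,
    isSuperfluous_of_le_smul_top (P := Fin _ → R) fun r hr => ?_⟩⟩
  · rw [← LinearMap.range_eq_top, Fintype.range_linearCombination]
    exact span_eq_top_of_tmul_eq_basis v b hv
  · rw [pi_eq_sum_univ' r]
    exact Submodule.sum_mem _ fun i _ =>
      Submodule.smul_mem_smul (mem_maximalIdeal_of_sum_smul_eq_zero hind hr i) trivial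

theorem exists_minRes (R X : Type u) [CommRing R] [IsLocalRing R] [IsNoetherianRing R]
    [AddCommGroup X] [Module R X] [Module.Finite R X] : Nonempty (MinRes R X) := by
  let c (S : FGModuleCat.{u} R) : ProjCover R S := (exists_projCover R S).some
  have (S : FGModuleCat.{u} R) : Module.Finite R (c S).P := (c S).finite
  let S (n : ℕ) : FGModuleCat.{u} R :=
    n.rec (FGModuleCat.of R X) fun _ T => FGModuleCat.of R (LinearMap.ker (c T).π)
  let d (i : ℕ) : (c (S (i + 1))).P →ₗ[R] (c (S i)).P :=
    (LinearMap.ker (c (S i)).π).subtype ∘ₗ (c (S (i + 1))).π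
  have hrange (i : ℕ) : LinearMap.range (d i) = LinearMap.ker (c (S i)).π := by
    refine (LinearMap.range_comp_of_range_eq_top _
      (LinearMap.range_eq_top.2 (c (S (i + 1))).surj)).trans (Submodule.range_subtype _)
  have hker (i : ℕ) : LinearMap.ker (d i) = LinearMap.ker (c (S (i + 1))).π :=
    LinearMap.ker_comp_of_ker_eq_bot _ (Submodule.ker_subtype _)
  exact ⟨{
    P i := (c (S i)).P
    projective i := (c (S i)).projective
    finite i := (c (S i)).finite
    d := d
    ε := (c (S 0)).π
    surj := (c (S 0)).surj
    exact0 := hrange 0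
    exact i := (hrange (i + 1)).trans (hker i).symm
    min_eps := (c (S 0)).superfluous
    min_d i := (hker i).symm ▸ (c (S (i + 1))).superfluous }⟩

end IsLocalRing

end Projective

section Linkage

open IsLocalRing

variable {R : Type u} [CommRing R] [IsLocalRing R] {M : Type u} [AddCommGroup M] [Module R M]

theorem IsStableModule.dual_apply_mem_maximalIdeal (hM : IsStableModule R M)
    (f : Module.Dual R M) (x : M) : f x ∈ maximalIdeal R := by
  by_contra hfx
  obtain ⟨u, hu⟩ : IsUnit (f x) := by simpa using hfx
  let y : M := (↑u⁻¹ : R) • x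
  have hfy : f y = 1 := by simp [y, ← hu]
  let σ : R →ₗ[R] M := LinearMap.toSpanSingleton R M y
  have hfσ : Function.LeftInverse f σ := fun a => by simp [σ, hfy]
  have hcompl : IsCompl (LinearMap.range σ) (LinearMap.ker (σ.rangeRestrict ∘ₗ f)) :=
    LinearMap.isCompl_of_proj <| by
      rintro ⟨_, a, rfl⟩
      exact Subtype.ext (congrArg σ (hfσ a))
  have hproj : Module.Projective R (LinearMap.range σ) :=
    Module.Projective.of_equiv (LinearEquiv.ofInjective σ hfσ.injective)
  have hσ : σ = 0 := LinearMap.range_eq_bot.1 (hM _ hproj ⟨_, hcompl⟩)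
  exact one_ne_zero ((hfσ 1).symm.trans (by simp [hσ]))

namespace MinRes

variable (F : MinRes R M)

theorem isSuperfluous_ker_lambdaCover (hM : IsStableModule R M) :
    (LinearMap.ker F.lambdaCover).IsSuperfluous := by
  have := F.finite 0
  have := F.projective 0
  refine isSuperfluous_of_le_smul_top fun f hf => mem_smul_top_of_forall_dual_mem fun φ => ?_
  obtain ⟨g, rfl⟩ := (F.isShortExact_dual.exact f).1 hf
  obtain ⟨x, rfl⟩ := (Module.bijective_dual_eval R (F.P 0)).2 φ
  exact hM.dual_apply_mem_maximalIdeal g (F.ε x)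

/-- For a stable module `M`, the surjection `P₀* → λM` is a projective cover. -/
def lambdaProjCover (hM : IsStableModule R M) : ProjCover R F.lambdaMod where
  P := ModuleCat.of R (Module.Dual R (F.P 0))
  projective :=
    have := F.finite 0
    have := F.projective 0
    inferInstanceAs (Module.Projective R (Module.Dual R (F.P 0)))
  finite :=
    have := F.finite 0
    have := F.projective 0
    inferInstanceAs (Module.Finite R (Module.Dual R (F.P 0)))
  π := F.lambdaCover
  surj := F.isShortExact_dual.surjective
  superfluous := F.isSuperfluous_ker_lambdaCover hM

theorem nonempty_lambdaMod_cons_linearEquiv (hM : IsStableModule R M)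
    (heval : Function.Injective (Module.Dual.eval R M))
    (H : MinRes R (LinearMap.ker (F.lambdaProjCover hM).π)) :
    Nonempty ((cons (F.lambdaProjCover hM) H).lambdaMod ≃ₗ[R] M) := by
  have := F.finite 0
  have := F.projective 0
  let e : Module.Dual R M ≃ₗ[R] LinearMap.ker F.lambdaCover := F.isShortExact_dual.equivKer
  let δ : Module.Dual R (Module.Dual R (F.P 0)) →ₗ[R] Module.Dual R (H.P 0) :=
    ((LinearMap.ker F.lambdaCover).subtype ∘ₗ H.ε).dualMap
  let θ : M →ₗ[R] Module.Dual R (H.P 0) :=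
    (e.symm.toLinearMap ∘ₗ H.ε).dualMap ∘ₗ Module.Dual.eval R M
  have hsurj : Function.Surjective (e.symm.toLinearMap ∘ₗ H.ε) := e.symm.surjective.comp H.surj
  have hθ : Function.Injective θ :=
    (LinearMap.dualMap_injective_of_surjective hsurj).comp heval
  have hδθ : δ ∘ₗ Module.Dual.eval R (F.P 0) = θ ∘ₗ F.ε := by
    ext p q
    exact (LinearMap.congr_fun (F.isShortExact_dual.apply_equivKer_symm (H.ε q)) p).symm
  have hrange : LinearMap.range δ = LinearMap.range θ := by
    rw [← LinearMap.range_comp_of_range_eq_top θ (LinearMap.range_eq_top.2 F.surj), ← hδθ,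
      LinearMap.range_comp_of_range_eq_top δ
        (LinearMap.range_eq_top.2 (Module.bijective_dual_eval R (F.P 0)).2)]
  exact ⟨(LinearEquiv.ofEq _ _ hrange).trans (LinearEquiv.ofInjective θ hθ).symm⟩

theorem exists_lambdaMod_lambdaMod_linearEquiv [IsNoetherianRing R] (hM : IsStableModule R M)
    (heval : Function.Injective (Module.Dual.eval R M)) :
    ∃ G : MinRes R F.lambdaMod, Nonempty (G.lambdaMod ≃ₗ[R] M) := by
  have := (F.lambdaProjCover hM).finite
  obtain ⟨H⟩ := exists_minRes R (LinearMap.ker (F.lambdaProjCover hM).π)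
  exact ⟨cons _ H, F.nonempty_lambdaMod_cons_linearEquiv hM heval H⟩

end MinRes

end Linkage

section GDimension

open IsLocalRing

variable {R : Type u} [CommRing R] {I : Ideal R}
variable {X Y Z A : Type u} [AddCommGroup X] [Module R X] [AddCommGroup Y] [Module R Y]
  [AddCommGroup Z] [Module R Z] [AddCommGroup A] [Module R A]

theorem isGDimZero_of_GDim_eq_zero (h : GDim R A = 0) : IsGDimZero R A := by
  by_contra hA
  have hle : ((1 : ℕ) : ℕ∞) ≤ GDim R A := natCast_le_sInf_natCast_iff.2 fun k hk hGk => by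
    obtain rfl := Nat.lt_one_iff.1 hk
    exact hA hGk
  simp [h] at hle

theorem IsGDimZero.GDim_eq_zero (h : IsGDimZero R A) : GDim R A = 0 :=
  le_antisymm (sInf_le ⟨0, rfl, h⟩) bot_le

theorem exists_GDimLE_of_GDim_lt_top (h : GDim R A < ⊤) : ∃ n, GDimLE R n (ModuleCat.of R A) := by
  obtain ⟨_, ⟨n, -, hn⟩, -⟩ := sInf_lt_iff.1 h
  exact ⟨n, hn⟩

theorem rgr_eq_top_iff : rgr R X = ⊤ ↔ ∀ n, ExtVanishes R (n + 1) X R := by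
  rw [ENat.eq_top_iff_forall_ge]
  simp only [natCast_le_rgr_iff]
  exact ⟨fun h n => h (n + 2) n (by omega), fun h _ n _ => h n⟩

theorem isGDimZero_iff : IsGDimZero R A ↔ Module.Finite R A ∧
    Function.Bijective (Module.Dual.eval R A) ∧ rgr R A = ⊤ ∧ rgr R (Module.Dual R A) = ⊤ := by
  have hext (B : Type u) [AddCommGroup B] [Module R B] :
      (∀ i, 0 < i → Subsingleton (extM R i B R)) ↔ rgr R B = ⊤ := by
    simp only [rgr_eq_top_iff, subsingleton_extM_iff]
    exact ⟨fun h n => h _ n.succ_pos, fun h i hi => Nat.succ_pred_eq_of_pos hi ▸ h _⟩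
  rw [IsGDimZero, hext, hext]

namespace IsShortExact

variable {f : X →ₗ[R] Y} {g : Y →ₗ[R] Z}

theorem rgr_le_rgr_add_one (h : IsShortExact f g) (hY : rgr R Y = ⊤) :
    rgr R Z ≤ rgr R X + 1 := by
  rw [← ENat.forall_natCast_le_iff_le]
  rintro (_ | n) hn
  · simp
  rw [Nat.cast_succ, ENat.add_le_add_iff_right ENat.one_ne_top]
  rw [natCast_le_rgr_iff] at hn ⊢
  exact fun j hj => h.extVanishes_from_left (rgr_eq_top_iff.1 hY j) (hn _ (by omega))

theorem isGDimZero_right (h : IsShortExact f g) (hX : IsGDimZero R X) (hY : IsGDimZero R Y)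
    (hZ : ExtVanishes R 1 Z R) : IsGDimZero R Z := by
  obtain ⟨-, hevalX, hrX, hrX'⟩ := isGDimZero_iff.1 hX
  obtain ⟨hfin, hevalY, hrY, hrY'⟩ := isGDimZero_iff.1 hY
  rw [rgr_eq_top_iff] at hrX hrX' hrY hrY'
  have hdual := h.dualMap (h.exists_comp_eq_of_extVanishes_one hZ)
  have hbidual := hdual.dualMap (hdual.exists_comp_eq_of_extVanishes_one (hrX' 0))
  refine isGDimZero_iff.2 ⟨Module.Finite.of_surjective g h.surjective,
    LinearMap.bijective_of_surjective_of_bijective_of_right_exact f g f.dualMap.dualMap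
      g.dualMap.dualMap _ _ _ rfl rfl h.exact hbidual.exact hevalX.2 hevalY h.surjective
      hbidual.surjective, rgr_eq_top_iff.2 ?_,
    rgr_eq_top_iff.2 fun n => hdual.extVanishes_from_left (hrY' n) (hrX' (n + 1))⟩
  rintro (_ | n)
  · exact hZ
  · exact h.extVanishes_from_right_succ (hrY _) (hrX n)

end IsShortExact

namespace MinRes

theorem edepth_le_edepth_range_dualMap (F : MinRes R X) (hX : rgr R X = ⊤) (i : ℕ) :
    edepth R I R ≤ edepth R I (LinearMap.range (F.d i).dualMap) := by
  rw [← ENat.forall_natCast_le_iff_le]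
  intro n hn
  exact (le_min hn (by simp)).trans (min_le_edepth_range (fun i => (F.d i).dualMap)
    F.edepth_le_edepth_dual n i fun l _ _ => F.exact_dualMap (rgr_eq_top_iff.1 hX l))

/-- The embedding of a module `A` into `Q₀*`, for a resolution `Q` of `A*`. -/
def bidualEmbedding (Q : MinRes R (Module.Dual R A)) : A →ₗ[R] Module.Dual R (Q.P 0) :=
  Q.ε.dualMap ∘ₗ Module.Dual.eval R A

variable (Q : MinRes R (Module.Dual R A))

theorem eval_comp_bidualEmbedding (q : Q.P 0) :
    Module.Dual.eval R (Q.P 0) q ∘ₗ Q.bidualEmbedding = Q.ε q :=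
  rfl

theorem isShortExact_bidualEmbedding (hA : Function.Bijective (Module.Dual.eval R A)) :
    IsShortExact Q.bidualEmbedding Q.lambdaCover :=
  Q.isShortExact_dual.comp_linearEquiv (LinearEquiv.ofBijective _ hA)

theorem extMap_bidualEmbedding_injective (hA : IsGDimZero R A) {n : ℕ}
    (hn : (n : ℕ∞) ≤ edepth R I R) :
    Function.Injective (extMap (R ⧸ I) n Q.bidualEmbedding) :=
  have hA := isGDimZero_iff.1 hA
  (Q.isShortExact_bidualEmbedding hA.2.1).extMap_injective
    (hn.trans (Q.edepth_le_edepth_range_dualMap hA.2.2.2 0))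

end MinRes

theorem smul_ext_quotient_eq_zero {n : ℕ} {a : R} (ha : a ∈ I)
    (ξ : Abelian.Ext.{u} (ModuleCat.of R (R ⧸ I)) (ModuleCat.of R Y) n) : a • ξ = 0 := by
  have hid : a • 𝟙 (ModuleCat.of R (R ⧸ I)) = 0 := by
    refine ModuleCat.hom_ext (LinearMap.ext fun x => ?_)
    obtain ⟨b, rfl⟩ := Ideal.Quotient.mk_surjective x
    exact Ideal.Quotient.eq_zero_iff_mem.2 (I.mul_mem_right b ha)
  calc
    a • ξ = (Abelian.Ext.mk₀ (a • 𝟙 (ModuleCat.of R (R ⧸ I)))).comp ξ (zero_add n) := by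
      simp [Abelian.Ext.mk₀_smul]
    _ = 0 := by simp [hid]

theorem exists_linearMap_ne_zero_of_ne_top [IsLocalRing R] [Module.Finite R Y]
    {N : Submodule R Y} (hN : N ≠ ⊤) {ξ : X} (hξ : ξ ≠ 0) (hm : ∀ a ∈ maximalIdeal R, a • ξ = 0) :
    ∃ h : Y →ₗ[R] X, h ≠ 0 ∧ ∀ y ∈ N, h y = 0 := by
  obtain ⟨W, hW, hNW⟩ := (eq_top_or_exists_le_coatom N).resolve_left hN
  have := isSimpleModule_iff_isCoatom.2 hW
  obtain ⟨J, hJ, ⟨e⟩⟩ := isSimpleModule_iff_quot_maximal.1 this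
  obtain rfl := eq_maximalIdeal hJ
  let k : (R ⧸ maximalIdeal R) →ₗ[R] X :=
    Submodule.liftQ _ (LinearMap.toSpanSingleton R X ξ) hm
  refine ⟨k ∘ₗ e.toLinearMap ∘ₗ W.mkQ, fun h0 => hξ ?_, fun y hy => ?_⟩
  · obtain ⟨y, hy⟩ := W.mkQ_surjective (e.symm (Submodule.Quotient.mk 1))
    have hk : k (e (W.mkQ y)) = 0 := LinearMap.congr_fun h0 y
    rw [hy, e.apply_symm_apply] at hk
    exact (one_smul R ξ).symm.trans hk
  · simp [(Submodule.Quotient.mk_eq_zero W).2 (hNW hy)]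

section IsLocalRing

variable [IsLocalRing R] [IsNoetherianRing R]

theorem IsGDimZero.edepth_le_edepth (hA : IsGDimZero R A) : edepth R I R ≤ edepth R I A := by
  obtain ⟨hfin, heval, -, hrgr⟩ := isGDimZero_iff.1 hA
  obtain ⟨Q⟩ := exists_minRes R (Module.Dual R A)
  refine le_trans (le_min (Q.edepth_le_edepth_dual 0) ?_)
    (Q.isShortExact_bidualEmbedding heval).min_edepth_le_edepth_left
  exact (Q.edepth_le_edepth_range_dualMap hrgr 0).trans le_self_add

theorem IsGDimZero.exists_ext_extMap_dual_eq (hA : IsGDimZero R A) {n : ℕ}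
    (hn : (n : ℕ∞) ≤ edepth R I R)
    (h : Module.Dual R A →ₗ[R] Abelian.Ext.{u} (ModuleCat.of R (R ⧸ I)) (ModuleCat.of R R) n) :
    ∃ x : Abelian.Ext.{u} (ModuleCat.of R (R ⧸ I)) (ModuleCat.of R A) n,
      ∀ φ : Module.Dual R A, extMap (R ⧸ I) n φ x = h φ := by
  obtain ⟨hfin, heval, -, hrgr⟩ := isGDimZero_iff.1 hA
  obtain ⟨Q⟩ := exists_minRes R (Module.Dual R A)
  have hQfin (i : ℕ) : Module.Finite R (Q.P i) := Q.finite i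
  have hQproj (i : ℕ) : Module.Projective R (Q.P i) := Q.projective i
  obtain ⟨y, hy⟩ := exists_ext_dual_extMap_eval_eq (h ∘ₗ Q.ε)
  have hdy : extMap (R ⧸ I) n (Q.d 0).dualMap y = 0 := by
    refine ext_eq_zero_of_forall_dual fun φ => ?_
    obtain ⟨q, rfl⟩ := (Module.bijective_dual_eval R (Q.P 1)).2 φ
    rw [← extMap_comp_apply]
    refine (hy (Q.d 0 q)).trans ?_
    rw [LinearMap.comp_apply, show Q.ε (Q.d 0 q) = 0 from
      Q.toProjRes.exact_zero.apply_apply_eq_zero q, map_zero]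
  have hcover : extMap (R ⧸ I) n Q.lambdaCover y = 0 := by
    have hses := Q.isShortExact_lambdaInclusion (rgr_eq_top_iff.1 hrgr 0)
    refine hses.extMap_injective (hn.trans (Q.edepth_le_edepth_range_dualMap hrgr 1)) ?_
    rw [← extMap_comp_apply, map_zero]
    exact hdy
  obtain ⟨x, rfl⟩ := ((Q.isShortExact_bidualEmbedding heval).exact_extMap n y).1 hcover
  refine ⟨x, fun φ => ?_⟩
  obtain ⟨q, rfl⟩ := Q.surj φ
  rw [← Q.eval_comp_bidualEmbedding, extMap_comp_apply]
  exact hy q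

theorem IsGDimZero.not_injective_extMap_of_not_surjective_dualMap (hA : IsGDimZero R A)
    [Module.Finite R Y] [Module.Projective R Y] {f : A →ₗ[R] Y}
    (hf : ¬ Function.Surjective f.dualMap) {n : ℕ} (hn : (n : ℕ∞) = rdepth R) :
    ¬ Function.Injective (extMap (R ⧸ maximalIdeal R) n f) := by
  have := (isGDimZero_iff.1 hA).1
  obtain ⟨ξ, hξ⟩ := not_forall.1 (mt extVanishes_iff.2 (not_extVanishes_of_edepth_eq hn.symm))
  obtain ⟨h, hh, hvanish⟩ := exists_linearMap_ne_zero_of_ne_top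
    (mt LinearMap.range_eq_top.1 hf) hξ fun a ha => smul_ext_quotient_eq_zero ha ξ
  obtain ⟨x, hx⟩ := hA.exists_ext_extMap_dual_eq hn.le h
  have hfx : extMap (R ⧸ maximalIdeal R) n f x = 0 := ext_eq_zero_of_forall_dual fun φ => by
    rw [← extMap_comp_apply]
    exact (hx (f.dualMap φ)).trans (hvanish _ ⟨φ, rfl⟩)
  intro hinj
  have hx0 : x = 0 := hinj (hfx.trans (map_zero _).symm)
  exact hh (LinearMap.ext fun φ => by rw [← hx, hx0, map_zero, LinearMap.zero_apply])

theorem IsShortExact.rgr_add_edepth_le_rdepth_of_isGDimZero {f : X →ₗ[R] Y} {g : Y →ₗ[R] Z}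
    (h : IsShortExact f g) (hX : IsGDimZero R X) (hY : IsGDimZero R Y) (hZ : ¬ IsGDimZero R Z) :
    rgr R Z + edepth R (maximalIdeal R) Z ≤ rdepth R := by
  have hext : ¬ ExtVanishes R 1 Z R := mt (h.isGDimZero_right hX hY) hZ
  have hrgr : rgr R Z ≤ 1 := by
    by_contra! hlt
    exact hext (natCast_le_rgr_iff.1 (Order.add_one_le_of_lt hlt) 0 (by norm_num))
  obtain ⟨hfin, -, hrY, -⟩ := isGDimZero_iff.1 hY
  obtain ⟨Q⟩ := exists_minRes R (Module.Dual R Y)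
  have hQfin : Module.Finite R (Q.P 0) := Q.finite 0
  have hQproj : Module.Projective R (Q.P 0) := Q.projective 0
  obtain ⟨n, hn⟩ := ENat.ne_top_iff_exists.1 (rdepth_lt_top (R := R)).ne
  have hdual : ¬ Function.Surjective (Q.bidualEmbedding ∘ₗ f).dualMap := fun hsurj =>
    hext (h.extVanishes_one_of_exists_comp_eq (rgr_eq_top_iff.1 hrY 0) fun φ => by
      obtain ⟨ψ, hψ⟩ := hsurj φ
      exact ⟨ψ ∘ₗ Q.bidualEmbedding, hψ⟩)
  have hedepth : edepth R (maximalIdeal R) Z < n := by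
    by_contra! hle
    refine hX.not_injective_extMap_of_not_surjective_dualMap hdual hn fun x y hxy => ?_
    rw [extMap_comp_apply, extMap_comp_apply] at hxy
    exact h.extMap_injective hle (Q.extMap_bidualEmbedding_injective hY hn.le hxy)
  calc
    _ ≤ 1 + edepth R (maximalIdeal R) Z := add_le_add_left hrgr _
    _ ≤ n := by rw [add_comm]; exact Order.add_one_le_of_lt hedepth
    _ = rdepth R := hn

theorem edepth_lt_rdepth_of_rgr_add_edepth_le
    (h : rgr R X + edepth R (maximalIdeal R) X ≤ rdepth R) :
    edepth R (maximalIdeal R) X < rdepth R := by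
  rw [← ENat.add_one_le_iff (ne_top_of_le_ne_top rdepth_lt_top.ne (le_add_self.trans h)), add_comm]
  exact (add_le_add_left one_le_rgr _).trans h

theorem rgr_add_edepth_le_rdepth_of_GDimLE {n : ℕ} (hX : GDimLE R n (ModuleCat.of R X))
    (hX' : ¬ IsGDimZero R X) : rgr R X + edepth R (maximalIdeal R) X ≤ rdepth R := by
  induction n generalizing X with
  | zero => exact absurd hX hX'
  | succ n ih =>
    obtain ⟨G, f, hG, hf, hK⟩ := hX
    have hses := IsShortExact.ker_subtype hf
    by_cases hK' : IsGDimZero R (LinearMap.ker f)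
    · exact hses.rgr_add_edepth_le_rdepth_of_isGDimZero hK' hG hX'
    have hrgr := hses.rgr_le_rgr_add_one (isGDimZero_iff.1 hG).2.2.1
    have hK_le := ih hK hK'
    have hlt := edepth_lt_rdepth_of_rgr_add_edepth_le hK_le
    have hdepth : edepth R (maximalIdeal R) X + 1 ≤ edepth R (maximalIdeal R) (LinearMap.ker f) :=
      (min_le_iff.1 hses.min_edepth_le_edepth_left).resolve_left
        (hlt.trans_le hG.edepth_le_edepth).not_ge
    calc
      _ ≤ rgr R (LinearMap.ker f) + 1 + edepth R (maximalIdeal R) X := add_le_add_left hrgr _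
      _ = rgr R (LinearMap.ker f) + (edepth R (maximalIdeal R) X + 1) := by ring
      _ ≤ rgr R (LinearMap.ker f) + edepth R (maximalIdeal R) (LinearMap.ker f) :=
        add_le_add_right hdepth _
      _ ≤ rdepth R := hK_le

end IsLocalRing

end GDimension

section Localization

variable {R : Type u} [CommRing R] (S : Submonoid R)
variable {X Y Z : Type u} [AddCommGroup X] [Module R X] [AddCommGroup Y] [Module R Y]
  [AddCommGroup Z] [Module R Z]

/-- The localization `X* → (S⁻¹X)*` of linear forms. -/
noncomputable def localizedDual :
    Module.Dual R X →ₗ[R] Module.Dual (Localization S) (LocalizedModule S X) :=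
  IsLocalizedModule.mapExtendScalars S (LocalizedModule.mkLinearMap S X)
    (Algebra.linearMap R (Localization S)) (Localization S)

instance [Module.FinitePresentation R X] : IsLocalizedModule S (localizedDual S (X := X)) :=
  Module.FinitePresentation.isLocalizedModule_mapExtendScalars S _ _ _

theorem localizedDual_apply_mkLinearMap (φ : Module.Dual R X) (x : X) :
    localizedDual S φ (LocalizedModule.mkLinearMap S X x) = algebraMap R (Localization S) (φ x) :=
  IsLocalizedModule.map_apply S (LocalizedModule.mkLinearMap S X)
    (Algebra.linearMap R (Localization S)) φ x

theorem localizedDual_dualMap (f : X →ₗ[R] Y) (φ : Module.Dual R Y) :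
    localizedDual S (f.dualMap φ) = (LocalizedModule.map S f).dualMap (localizedDual S φ) := by
  apply LinearMap.restrictScalars_injective R
  apply IsLocalizedModule.linearMap_ext S (LocalizedModule.mkLinearMap S X)
    (Algebra.linearMap R (Localization S))
  ext x
  have hmap : LocalizedModule.map S f (LocalizedModule.mkLinearMap S X x) =
      LocalizedModule.mkLinearMap S Y (f x) := LocalizedModule.map_mk S f x 1
  refine (localizedDual_apply_mkLinearMap S (f.dualMap φ) x).trans ?_
  refine (localizedDual_apply_mkLinearMap S φ (f x)).symm.trans ?_
  rw [← hmap]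
  rfl

/-- The isomorphism `S⁻¹(X*) ≃ (S⁻¹X)*` for a finitely presented module `X`. -/
noncomputable def localizedDualEquiv [Module.FinitePresentation R X] :
    LocalizedModule S (Module.Dual R X) ≃ₗ[Localization S]
      Module.Dual (Localization S) (LocalizedModule S X) :=
  (IsLocalizedModule.linearEquiv S (LocalizedModule.mkLinearMap S (Module.Dual R X))
    (localizedDual S)).extendScalarsOfIsLocalization S (Localization S)

theorem localizedDualEquiv_mkLinearMap [Module.FinitePresentation R X] (φ : Module.Dual R X) :
    localizedDualEquiv S (LocalizedModule.mkLinearMap S (Module.Dual R X) φ) = localizedDual S φ :=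
  IsLocalizedModule.linearEquiv_apply S _ _ φ

theorem localizedDualEquiv_map_dualMap [Module.FinitePresentation R X]
    [Module.FinitePresentation R Y] (f : X →ₗ[R] Y) :
    (LocalizedModule.map S f).dualMap ∘ₗ (localizedDualEquiv S).toLinearMap =
      (localizedDualEquiv S).toLinearMap ∘ₗ LocalizedModule.map S f.dualMap := by
  apply LinearMap.restrictScalars_injective R
  apply IsLocalizedModule.linearMap_ext S (LocalizedModule.mkLinearMap S (Module.Dual R Y))
    (localizedDual S (X := X))
  ext1 φ
  have hmap : LocalizedModule.map S f.dualMap (LocalizedModule.mkLinearMap S _ φ) =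
      LocalizedModule.mkLinearMap S _ (f.dualMap φ) := LocalizedModule.map_mk S f.dualMap φ 1
  change (LocalizedModule.map S f).dualMap (localizedDualEquiv S _) =
    localizedDualEquiv S (LocalizedModule.map S f.dualMap _)
  rw [hmap, localizedDualEquiv_mkLinearMap, localizedDualEquiv_mkLinearMap, localizedDual_dualMap]

theorem exists_smul_eq_zero_of_eval_eq_zero [Module.FinitePresentation R X]
    (hinj : Function.Injective (Module.Dual.eval (Localization S) (LocalizedModule S X))) {x : X}
    (hx : Module.Dual.eval R X x = 0) : ∃ s ∈ S, s • x = 0 := by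
  have hmk : LocalizedModule.mkLinearMap S X x = 0 := by
    refine hinj (LinearMap.ext fun φ => ?_)
    obtain ⟨⟨ψ, s⟩, hψ⟩ := IsLocalizedModule.surj S (localizedDual S) φ
    have hsφ := LinearMap.congr_fun hψ (LocalizedModule.mkLinearMap S X x)
    rw [localizedDual_apply_mkLinearMap, show ψ x = 0 from LinearMap.congr_fun hx ψ,
      map_zero] at hsφ
    rw [map_zero]
    exact IsLocalizedModule.smul_injective (Algebra.linearMap R (Localization S)) s
      (hsφ.trans (smul_zero s).symm)
  obtain ⟨s, hs⟩ := (IsLocalizedModule.eq_zero_iff S (LocalizedModule.mkLinearMap S X)).1 hmk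
  exact ⟨s, s.2, hs⟩

/-- The localization of a projective resolution. -/
noncomputable def ProjRes.localized (F : ProjRes R X) :
    ProjRes (Localization S) (LocalizedModule S X) where
  P i := ModuleCat.of _ (LocalizedModule S (F.P i))
  projective i := have := F.projective i
    Module.projective_of_isLocalizedModule S (LocalizedModule.mkLinearMap S (F.P i))
  d i := LocalizedModule.map S (F.d i)
  ε := LocalizedModule.map S F.ε
  surj := LocalizedModule.map_surjective S _ F.surj
  exact_zero := LocalizedModule.map_exact S _ _ F.exact_zero
  exact_succ i := LocalizedModule.map_exact S _ _ (F.exact_succ i)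

theorem MinRes.exists_smul_mem_range_dualMap [IsNoetherianRing R] (F : MinRes R X) {n : ℕ}
    (h : ExtVanishes (Localization S) (n + 1) (LocalizedModule S X) (Localization S))
    {φ : Module.Dual R (F.P (n + 1))} (hφ : (F.d (n + 1)).dualMap φ = 0) :
    ∃ s ∈ S, s • φ ∈ LinearMap.range (F.d n).dualMap := by
  have hfin (i : ℕ) : Module.Finite R (F.P i) := F.finite i
  have hfp (i : ℕ) : Module.FinitePresentation R (F.P i) := Module.finitePresentation_of_finite R _
  have hcocycle : (LocalizedModule.map S (F.d (n + 1))).dualMap (localizedDual S φ) = 0 := by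
    rw [← localizedDual_dualMap, hφ, map_zero]
  obtain ⟨ψ, hψ⟩ := (((F.toProjRes.localized S).extVanishes_succ_iff n).1 h _).1 hcocycle
  obtain ⟨⟨χ, s⟩, hχ⟩ := IsLocalizedModule.surj S (localizedDual S (X := F.P n)) ψ
  have heq : localizedDual S (s • φ) = localizedDual S ((F.d n).dualMap χ) := by
    rw [localizedDual_dualMap, LinearMap.map_smul_of_tower, ← hχ, ← hψ]
    rfl
  obtain ⟨t, ht⟩ := IsLocalizedModule.exists_of_eq (S := S) heq
  refine ⟨t * s, (t * s).2, t • χ, ?_⟩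
  rw [LinearMap.map_smul_of_tower, ← ht, ← mul_smul]
  rfl

theorem IsShortExact.localized {f : X →ₗ[R] Y} {g : Y →ₗ[R] Z} (h : IsShortExact f g) :
    IsShortExact (LocalizedModule.map S f) (LocalizedModule.map S g) where
  injective := LocalizedModule.map_injective S f h.injective
  exact := LocalizedModule.map_exact S f g h.exact
  surjective := LocalizedModule.map_surjective S g h.surjective

theorem IsShortExact.rgr_right_eq_top {p : X →ₗ[R] Y} (hp : Function.Surjective p)
    [Module.Finite R X] [Module.Projective R X] {g : Module.Dual R X →ₗ[R] Z}
    (h : IsShortExact p.dualMap g) (heval : Function.Surjective (Module.Dual.eval R Y))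
    (hY : rgr R (Module.Dual R Y) = ⊤) : rgr R Z = ⊤ := by
  rw [rgr_eq_top_iff] at hY ⊢
  rintro (_ | n)
  · refine h.extVanishes_one_of_exists_comp_eq (.of_projective 0) fun φ => ?_
    obtain ⟨y, rfl⟩ := heval φ
    obtain ⟨x, rfl⟩ := hp y
    exact ⟨Module.Dual.eval R X x, rfl⟩
  · exact h.extVanishes_from_right_succ (.of_projective _) (hY n)

theorem MinRes.rgr_localized_lambdaMod_eq_top [IsNoetherianRing R] [Module.Finite R X]
    (F : MinRes R X) (hX : IsGDimZero (Localization S) (LocalizedModule S X)) :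
    rgr (Localization S) (LocalizedModule S F.lambdaMod) = ⊤ := by
  have hfin : Module.Finite R (F.P 0) := F.finite 0
  have hproj : Module.Projective R (F.P 0) := F.projective 0
  have : Module.FinitePresentation R X := Module.finitePresentation_of_finite R X
  have : Module.FinitePresentation R (F.P 0) := Module.finitePresentation_of_finite R _
  have : Module.Projective (Localization S) (LocalizedModule S (F.P 0)) :=
    Module.projective_of_isLocalizedModule S (LocalizedModule.mkLinearMap S (F.P 0))
  obtain ⟨-, heval, -, hrgr⟩ := isGDimZero_iff.1 hX
  have hses := F.isShortExact_dual.localized S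
  have hses' : IsShortExact (LocalizedModule.map S F.ε).dualMap
      (LocalizedModule.map S F.lambdaCover ∘ₗ (localizedDualEquiv S).symm.toLinearMap) := by
    have hsurj := LocalizedModule.map_surjective S F.ε F.surj
    refine ⟨LinearMap.dualMap_injective_of_surjective hsurj, ?_,
      hses.surjective.comp (LinearEquiv.surjective _)⟩
    refine hses.exact.of_ladder_linearEquiv_of_exact (e₃ := LinearEquiv.refl _ _)
      (localizedDualEquiv_map_dualMap S F.ε) ?_
    ext x
    simp
  exact hses'.rgr_right_eq_top (LocalizedModule.map_surjective S F.ε F.surj) heval.2 hrgr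

end Localization

section PuncturedSpectrum

open IsLocalRing

variable {R : Type u} [CommRing R] [IsLocalRing R] [IsNoetherianRing R]
variable {X : Type u} [AddCommGroup X] [Module R X]

theorem MinRes.edepth_coker_dualMap_eq_zero (F : MinRes R X) {n : ℕ}
    (hX : ¬ ExtVanishes R (n + 1) X R)
    (hloc : ∀ (p : Ideal R) [p.IsPrime], p ≠ maximalIdeal R → locRgr R p X = ⊤) :
    edepth R (maximalIdeal R)
      (Module.Dual R (F.P (n + 1)) ⧸ LinearMap.range (F.d n).dualMap) = 0 := by
  have hcomplex : (F.d (n + 1)).dualMap ∘ₗ (F.d n).dualMap = 0 := by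
    rw [LinearMap.dualMap_comp_dualMap,
      (LinearMap.exact_iff.2 (F.exact n).symm).linearMap_comp_eq_zero]
    exact map_zero Module.Dual.transpose
  obtain ⟨φ, hcocycle, hφ⟩ : ∃ φ, (F.d (n + 1)).dualMap φ = 0 ∧
      φ ∉ LinearMap.range (F.d n).dualMap := by
    by_contra! hall
    refine hX ((F.toProjRes.extVanishes_succ_iff n).2 fun φ => ⟨hall φ, ?_⟩)
    rintro ⟨ψ, rfl⟩
    exact LinearMap.congr_fun hcomplex ψ
  refine edepth_maximalIdeal_eq_zero_of_locally_zero
    (mt (Submodule.Quotient.mk_eq_zero _).1 hφ) fun p hp hpm => ?_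
  have hvanish := rgr_eq_top_iff.1 (hloc p hpm) n
  obtain ⟨s, hs, hsφ⟩ := F.exists_smul_mem_range_dualMap p.primeCompl hvanish hcocycle
  exact ⟨s, hs, (Submodule.Quotient.mk_eq_zero _).2 hsφ⟩

theorem MinRes.rgr_eq_edepth_lambdaMod (F : MinRes R X)
    (hloc : ∀ (p : Ideal R) [p.IsPrime], p ≠ maximalIdeal R → locRgr R p X = ⊤)
    (hle : rgr R X ≤ rdepth R) : rgr R X = edepth R (maximalIdeal R) F.lambdaMod := by
  refine le_antisymm ((le_min le_rfl hle).trans F.min_rgr_edepth_le_edepth_lambdaMod) ?_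
  obtain ⟨n, hn⟩ : ∃ n : ℕ, rgr R X = (n + 1 : ℕ) := by
    obtain ⟨k, hk⟩ := ENat.ne_top_iff_exists.1 (hle.trans_lt rdepth_lt_top).ne
    have hk1 : 1 ≤ k := by exact_mod_cast hk ▸ one_le_rgr (R := R) (X := X)
    exact ⟨k - 1, by rw [← hk, Nat.sub_add_cancel hk1]⟩
  have hlt : (n : ℕ∞) < rdepth R := (Nat.cast_lt.2 n.lt_succ_self).trans_le (hn ▸ hle)
  rw [hn]
  exact edepth_range_le_of_edepth_coker_eq_zero (fun i => (F.d i).dualMap) (zero_add n)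
    (fun i => hlt.trans_le (F.edepth_le_edepth_dual i))
    (fun l _ hl => F.exact_dualMap (natCast_le_rgr_iff.1 hn.ge l (by omega)))
    (F.edepth_coker_dualMap_eq_zero (not_extVanishes_of_rgr_eq hn) hloc)

theorem dual_eval_injective_of_edepth_ne_zero [Module.Finite R X]
    (hX : edepth R (maximalIdeal R) X ≠ 0)
    (hloc : ∀ (p : Ideal R) [p.IsPrime], p ≠ maximalIdeal R → Function.Injective
      (Module.Dual.eval (Localization.AtPrime p) (LocalizedModule p.primeCompl X))) :
    Function.Injective (Module.Dual.eval R X) := by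
  have : Module.FinitePresentation R X := Module.finitePresentation_of_finite R X
  refine (injective_iff_map_eq_zero _).2 fun x hx => ?_
  by_contra hx0
  exact hX (edepth_maximalIdeal_eq_zero_of_locally_zero hx0 fun p _ hpm =>
    exists_smul_eq_zero_of_eval_eq_zero p.primeCompl (hloc p hpm) hx)

end PuncturedSpectrum

section HorizontalLinkage

open IsLocalRing

variable {R : Type u} [CommRing R] {M : Type u} [AddCommGroup M] [Module R M]

theorem IsHorizontallyLinked.edepth_ne_zero {I : Ideal R} (hM : IsHorizontallyLinked R M)
    (hI : 0 < edepth R I R) : edepth R I M ≠ 0 := by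
  obtain ⟨F, G, ⟨e⟩⟩ := hM
  rw [← edepth_eq_of_linearEquiv e, ← pos_iff_ne_zero]
  exact (lt_min (zero_lt_one.trans_le one_le_rgr) hI).trans_le G.min_rgr_edepth_le_edepth_lambdaMod

variable [IsLocalRing R] [IsNoetherianRing R]

theorem rgr_add_edepth_le_rdepth (hM : 0 < GDim R M) (hM' : GDim R M < ⊤) :
    rgr R M + edepth R (maximalIdeal R) M ≤ rdepth R := by
  obtain ⟨n, hn⟩ := exists_GDimLE_of_GDim_lt_top hM'
  exact rgr_add_edepth_le_rdepth_of_GDimLE hn fun h => hM.ne' h.GDim_eq_zero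

variable [Module.Finite R M]

theorem exists_lambdaMod_lambdaMod_linearEquiv_of_edepth_ne_zero (hM : IsStableModule R M)
    (hloc : ∀ (p : Ideal R) [p.IsPrime], p ≠ maximalIdeal R → locGDim R p M = 0)
    (hdepth : edepth R (maximalIdeal R) M ≠ 0) (F : MinRes R M) :
    ∃ G : MinRes R F.lambdaMod, Nonempty (G.lambdaMod ≃ₗ[R] M) :=
  F.exists_lambdaMod_lambdaMod_linearEquiv hM <| dual_eval_injective_of_edepth_ne_zero hdepth
    fun p _ hp => (isGDimZero_of_GDim_eq_zero (hloc p hp)).2.1.1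

theorem MinRes.rgr_lambdaMod_eq_edepth (F : MinRes R M) (G : MinRes R F.lambdaMod)
    (e : G.lambdaMod ≃ₗ[R] M)
    (hloc : ∀ (p : Ideal R) [p.IsPrime], p ≠ maximalIdeal R → locGDim R p M = 0)
    (hlt : edepth R (maximalIdeal R) M < rdepth R) :
    rgr R F.lambdaMod = edepth R (maximalIdeal R) M := by
  have hmin : min (rgr R F.lambdaMod) (rdepth R) ≤ edepth R (maximalIdeal R) M :=
    G.min_rgr_edepth_le_edepth_lambdaMod.trans_eq (edepth_eq_of_linearEquiv e)
  have hle : rgr R F.lambdaMod ≤ rdepth R := by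
    by_contra! hgt
    exact (min_eq_right hgt.le ▸ hmin).not_gt hlt
  rw [← edepth_eq_of_linearEquiv e]
  exact G.rgr_eq_edepth_lambdaMod (fun p _ hp =>
    F.rgr_localized_lambdaMod_eq_top p.primeCompl (isGDimZero_of_GDim_eq_zero (hloc p hp))) hle

end HorizontalLinkage

section Statements

variable (R : Type u) [CommRing R] [IsNoetherianRing R]

theorem stmt16 [IsLocalRing R] (hdepth : 0 < rdepth R)
    (M : Type u) [AddCommGroup M] [Module R M] [Module.Finite R M]
    (hstable : IsStableModule R M)
    (hpunct : ∀ (p : Ideal R) (h : p.IsPrime), haveI := h;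
      p ≠ IsLocalRing.maximalIdeal R → locGDim R p M = 0)
    (F : MinRes R M) :
    (IsHorizontallyLinked R M ↔ gammaTorsion R (IsLocalRing.maximalIdeal R) M = ⊥) ∧
    (IsHorizontallyLinked R M → 0 < GDim R M → GDim R M < ⊤ →
      rgr R M = edepth R (IsLocalRing.maximalIdeal R) F.lambdaMod ∧
      rgr R F.lambdaMod = edepth R (IsLocalRing.maximalIdeal R) M) := by
  have hlink (hM : edepth R (IsLocalRing.maximalIdeal R) M ≠ 0) :=
    exists_lambdaMod_lambdaMod_linearEquiv_of_edepth_ne_zero hstable hpunct hM F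
  rw [gammaTorsion_eq_bot_iff]
  refine ⟨⟨fun hM => hM.edepth_ne_zero hdepth, fun hM => ⟨F, hlink hM⟩⟩, fun hM hpos hfin => ?_⟩
  have hrgr : ∀ (p : Ideal R) [p.IsPrime], p ≠ IsLocalRing.maximalIdeal R → locRgr R p M = ⊤ :=
    fun p hp hpm => (isGDimZero_iff.1 (isGDimZero_of_GDim_eq_zero (hpunct p hp hpm))).2.2.1
  obtain ⟨G, ⟨e⟩⟩ := hlink (hM.edepth_ne_zero hdepth)
  have hAB := rgr_add_edepth_le_rdepth hpos hfin
  exact ⟨F.rgr_eq_edepth_lambdaMod hrgr (le_self_add.trans hAB),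
    F.rgr_lambdaMod_eq_edepth G e hpunct (edepth_lt_rdepth_of_rgr_add_edepth_le hAB)⟩

end Statements
end

section
/- Let (R,m) be a local ring with depth R ≥ 2 and let M be an R-module. Let n be an integer with 1 < n ≤ depth R such that Ext^i_R(M,R) has finite length for all i with 1 ≤ i < n. Then Ext^i_R(M,R) ≅ H^i_m(λM) for all i with 1 ≤ i < n. -/
open CategoryTheory

section Statements

variable (R : Type u) [CommRing R] [IsNoetherianRing R]

/-!
Let `P₁ → P₀ → M → 0` be the given presentation with first syzygy `ΩM`, write `(-)*` for `Hom(-, N)`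
(`N = R` in the theorem), and let `B` be the image of `P₀* → (ΩM)*`, which is `λM`. There is an
exact sequence `0 → B → (ΩM)* → Ext¹(M, N) → 0`, and, if `C` is obtained from a cover `Q → ΩM` in
the same way, an exact sequence `0 → (ΩM)* → Q* → C → 0`.

In degree one, `H⁰` and `H¹` of `(ΩM)*` vanish because `N` has depth at least two, so `H¹(B) ≅
H⁰(Ext¹(M, N)) = Ext¹(M, N)`. In higher degrees one inducts along the syzygies: `Extⁱ⁺²(M, N) ≅
Extⁱ⁺¹(ΩM, N) ≅ Hⁱ⁺¹(C) ≅ Hⁱ⁺²((ΩM)*) ≅ Hⁱ⁺²(B)`, where the third isomorphism holds since `Q*` has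
at least the depth of `N`, and the last since the higher local cohomology of `Ext¹(M, N)`
vanishes: a power of the ideal kills it, and by Artin–Rees every class of `Extⁱ(A/Iᵗ, Ext¹(M, N))`
with `i > 0` dies in `Extⁱ(A/Iᵘ, Ext¹(M, N))` for large `u`.
-/

noncomputable section

section ExtOfResolution

open Limits Opposite

universe v w

lemma homologyUnop_inv_naturality {ι V : Type*} [Category* V] [Preadditive V]
    [CategoryWithHomology V] {c : ComplexShape ι} {K L : HomologicalComplex Vᵒᵖ c} (φ : K ⟶ L)
    (i : ι) :
    (HomologicalComplex.homologyMap φ i).unop ≫ (K.homologyUnop i).inv =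
      (L.homologyUnop i).inv ≫
        HomologicalComplex.homologyMap ((HomologicalComplex.unopFunctor _ _).map φ.op) i :=
  (CommSq.mk (HomologicalComplex.homologyOp_hom_naturality
    ((HomologicalComplex.unopFunctor _ _).map φ.op) i)).vert_inv.unop.w

variable {k : Type w} [Ring k] {C : Type*} [Category.{v} C] [Abelian C] [Linear k C] {X X' : C}

/-- The map `Hom(P', Y) ⟶ Hom(P, Y)` induced by a morphism of projective resolutions. -/
def linearYonedaObjMap {P : ProjectiveResolution X} {P' : ProjectiveResolution X'} {g : X ⟶ X'}
    (φ : ProjectiveResolution.Hom P P' g) (Y : C) :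
    P'.complex.linearYonedaObj k Y ⟶ P.complex.linearYonedaObj k Y :=
  (HomologicalComplex.unopFunctor _ _).map
    ((((linearYoneda k C).obj Y).rightOp.mapHomologicalComplex _).map φ.hom).op

lemma isoExt_hom_naturality [EnoughProjectives C] {P : ProjectiveResolution X}
    {P' : ProjectiveResolution X'} {g : X ⟶ X'} (φ : ProjectiveResolution.Hom P P' g) (Y : C)
    (n : ℕ) :
    ((Ext k C n).map g.op).app Y ≫ (P.isoExt n Y).hom =
      (P'.isoExt n Y).hom ≫ HomologicalComplex.homologyMap (linearYonedaObjMap φ Y) n := by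
  have h := CommSq.mk (ProjectiveResolution.isoLeftDerivedObj_inv_naturality g P P' φ.hom
    (by simpa using φ.hom_f_zero_comp_π_f_zero) ((linearYoneda k C).obj Y).rightOp n)
  exact (h.unop.flip.vert_comp (CommSq.mk (homologyUnop_inv_naturality _ n))).w

end ExtOfResolution

section ExtComparison

open Limits Abelian Opposite

universe v w

variable {k : Type w} [CommRing k] {C : Type*} [Category.{v} C] [Abelian C] [Linear k C]
  [HasExt.{v} C] {X X' : C} (P : ProjectiveResolution X) (Y : C) (n : ℕ)

lemma extMk_smul {Y : C} {n : ℕ} (r : k) (f : P.complex.X n ⟶ Y) (m : ℕ) (hm : n + 1 = m)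
    (hf : P.complex.d m n ≫ f = 0) :
    P.extMk (r • f) m hm (by simp [hf]) = r • P.extMk f m hm hf := by
  rw [Ext.smul_eq_comp_mk₀, P.extMk_comp_mk₀]
  simp

lemma extMk_eq_zero_iff_of_degree_zero {Y : C} (f : P.complex.X 0 ⟶ Y)
    (hf : P.complex.d 1 0 ≫ f = 0) : P.extMk f 1 rfl hf = 0 ↔ f = 0 := by
  refine ⟨fun h => ?_, fun h => by subst h; exact P.extMk_zero 1 rfl⟩
  rw [← P.extEquivCohomologyClass.apply_eq_iff_eq, P.extEquivCohomologyClass_extMk,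
    P.extEquivCohomologyClass_zero,
    CochainComplex.HomComplex.CohomologyClass.mk_eq_zero_iff,
    CochainComplex.HomComplex.Cocycle.toSingleMk_mem_coboundaries_iff _ _ _ _ _ 1 (by simp)] at h
  obtain ⟨g, hg⟩ := h
  have hX : IsZero (P.cochainComplex.X 1) := P.cochainComplex.isZero_of_isStrictlyLE 0 1
  rw [hX.eq_of_src g 0, comp_zero] at hg
  rw [← cancel_epi (P.cochainComplexXIso (-(0 : ℕ)) 0 rfl).hom, ← hg, comp_zero]

/-- In degree `0`, where `prev 0 = 0`, the differential on the right-hand side is zero. -/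
lemma extMk_eq_zero_iff_exists_prev {Y : C} {n : ℕ} (f : P.complex.X n ⟶ Y) (m : ℕ)
    (hm : n + 1 = m) (hf : P.complex.d m n ≫ f = 0) :
    P.extMk f m hm hf = 0 ↔
      ∃ g : P.complex.X ((ComplexShape.up ℕ).prev n) ⟶ Y, P.complex.d n _ ≫ g = f := by
  subst hm
  rcases n with _ | n
  · rw [extMk_eq_zero_iff_of_degree_zero, P.complex.shape _ _ (by simp)]
    simp [eq_comm]
  · rw [CochainComplex.prev_nat_succ]
    exact P.extMk_eq_zero_iff _ _ _ _ n rfl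

/-- The class in `Ext^n(X, Y)` of a cocycle of the complex `Hom(P, Y)`. -/
def extMkLinear : LinearMap.ker ((P.complex.linearYonedaObj k Y).sc n).g.hom →ₗ[k]
    Abelian.Ext X Y n where
  toFun f := P.extMk (n := n) f.1 _ (CochainComplex.next ℕ n).symm f.2
  map_add' _ _ := (P.add_extMk _ _ _ _ _ _).symm
  map_smul' r _ := extMk_smul P r _ _ _ _

lemma extMkLinear_surjective : Function.Surjective (extMkLinear (k := k) P Y n) := fun x => by
  obtain ⟨f, hf, rfl⟩ := P.extMk_surjective x _ (CochainComplex.next ℕ n).symm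
  exact ⟨⟨f, hf⟩, rfl⟩

lemma extMkLinear_eq_zero_iff (f : LinearMap.ker ((P.complex.linearYonedaObj k Y).sc n).g.hom) :
    extMkLinear P Y n f = 0 ↔ ∃ g, ((P.complex.linearYonedaObj k Y).sc n).f g = f.1 :=
  extMk_eq_zero_iff_exists_prev P (n := n) f.1 _ (CochainComplex.next ℕ n).symm f.2

/-- `Ext^n(X, Y)`, defined via the derived category, is the `n`-th cohomology of `Hom(P, Y)`. -/
def extLeftHomologyData : ((P.complex.linearYonedaObj k Y).sc n).LeftHomologyData :=
  let S := (P.complex.linearYonedaObj k Y).sc n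
  let hi := ModuleCat.kernelIsLimit S.g
  have wπ : hi.lift (KernelFork.ofι S.f S.zero) ≫ ModuleCat.ofHom (extMkLinear P Y n) = 0 := by
    ext g
    exact (extMkLinear_eq_zero_iff P Y n _).2 ⟨g, rfl⟩
  have hexact : (ShortComplex.mk _ _ wπ).Exact := by
    rw [ShortComplex.moduleCat_exact_iff]
    intro f hf
    obtain ⟨g, hg⟩ := (extMkLinear_eq_zero_iff P Y n f).1 hf
    exact ⟨g, Subtype.ext hg⟩
  have : Epi (ShortComplex.mk _ _ wπ).g :=
    (ModuleCat.epi_iff_surjective _).2 (extMkLinear_surjective P Y n)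
  { K := ModuleCat.of k (LinearMap.ker S.g.hom)
    H := ModuleCat.of k (Abelian.Ext X Y n)
    i := ModuleCat.ofHom (Submodule.subtype _)
    π := ModuleCat.ofHom (extMkLinear P Y n)
    wi := by ext f; exact f.2
    hi := hi
    wπ := wπ
    hπ := hexact.gIsCokernel }

lemma homologyMap_linearYonedaObjMap {P : ProjectiveResolution X} {P' : ProjectiveResolution X'}
    {g : X ⟶ X'} (φ : ProjectiveResolution.Hom P P' g) :
    HomologicalComplex.homologyMap (linearYonedaObjMap (k := k) φ Y) n ≫
        (extLeftHomologyData P Y n).homologyIso.hom =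
      (extLeftHomologyData P' Y n).homologyIso.hom ≫
        ModuleCat.ofHom (Ext.precompOfLinear (Ext.mk₀ g) k Y (zero_add n)) := by
  let γ : ShortComplex.LeftHomologyMapData
      ((HomologicalComplex.shortComplexFunctor _ _ n).map (linearYonedaObjMap (k := k) φ Y))
      (extLeftHomologyData P' Y n) (extLeftHomologyData P Y n) := default
  have hγ : γ.φH = ModuleCat.ofHom (Ext.precompOfLinear (Ext.mk₀ g) k Y (zero_add n)) := by
    refine (cancel_epi (extLeftHomologyData P' Y n).π).1 (γ.commπ.trans ?_)
    ext f
    have hf : P.complex.d ((ComplexShape.up ℕ).next n) n ≫ φ.hom.f n ≫ f.1 = 0 :=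
      (φ.hom.comm_assoc _ n f.1).symm.trans ((congrArg _ f.2).trans comp_zero)
    have hφf : γ.φK f = ⟨φ.hom.f n ≫ f.1, hf⟩ := Subtype.ext congr($(γ.commi) f)
    exact (congrArg (extMkLinear P Y n) hφf).trans
      (P'.mk₀_comp_extMk (n := n) f.1 _ (CochainComplex.next ℕ n).symm f.2 φ).symm
  rw [← hγ]
  exact γ.homologyMap_comm

variable (k) in
/-- The functor `Ext^n(-, Y)` with values in `k`-modules, defined via the derived category. -/
def extFunctorLeft : Cᵒᵖ ⥤ ModuleCat.{v} k where
  obj X := ModuleCat.of k (Abelian.Ext X.unop Y n)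
  map f := ModuleCat.ofHom (Ext.precompOfLinear (Ext.mk₀ f.unop) k Y (zero_add n))
  map_id X := by ext x; simp
  map_comp f g := by ext x; simp

/-- The two definitions of the functor `Ext^n(-, Y)`, by left derived functors and via the derived
category, agree. -/
def extFlipObjIso [EnoughProjectives C] :
    (_root_.Ext k C n).flip.obj Y ≅ extFunctorLeft k Y n :=
  NatIso.ofComponents
    (fun X => (projectiveResolution X.unop).isoExt n Y ≪≫
      (extLeftHomologyData (projectiveResolution X.unop) Y n).homologyIso)
    fun {X X'} f =>
      let φ : ProjectiveResolution.Hom (projectiveResolution X'.unop)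
          (projectiveResolution X.unop) f.unop :=
        { hom := ProjectiveResolution.lift f.unop _ _
          hom_f_zero_comp_π_f_zero := by
            rw [← HomologicalComplex.comp_f, ProjectiveResolution.lift_commutes,
              HomologicalComplex.comp_f] }
      ((CommSq.mk (isoExt_hom_naturality φ Y n)).vert_comp
        (CommSq.mk (homologyMap_linearYonedaObjMap Y n φ))).w

end ExtComparison

section FilteredColimit

open Limits

universe w

variable {k : Type*} [Ring k] {J : Type*} [Category* J] {F G : J ⥤ ModuleCat.{w} k}
  [HasColimit F] [PreservesColimit F (forget (ModuleCat.{w} k))]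

lemma isIso_colimit_desc (c : Cocone F)
    (hker : ∀ j (x : F.obj j), c.ι.app j x = 0 → ∃ (j' : J) (f : j ⟶ j'), F.map f x = 0)
    (hsurj : ∀ y : c.pt, ∃ (j : J) (x : F.obj j), c.ι.app j x = y) :
    IsIso (colimit.desc F c) := by
  have hdesc (j : J) (x : F.obj j) : colimit.desc F c (colimit.ι F j x) = c.ι.app j x :=
    congr($(colimit.ι_desc c j) x)
  refine (ConcreteCategory.isIso_iff_bijective _).2
    ⟨(injective_iff_map_eq_zero (colimit.desc F c).hom).2 fun x hx => ?_, fun y => ?_⟩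
  · obtain ⟨j, x, rfl⟩ := Concrete.colimit_exists_rep F x
    obtain ⟨j', f, hf⟩ := hker j x ((hdesc j x).symm.trans hx)
    calc colimit.ι F j x = colimit.ι F j' (F.map f x) := congr($(colimit.w F f) x).symm
      _ = 0 := by rw [hf, map_zero]
  · obtain ⟨j, x, rfl⟩ := hsurj y
    exact ⟨_, hdesc j x⟩

lemma isIso_colimMap_of_isFiltered [IsFiltered J] [HasColimit G]
    [PreservesColimit G (forget (ModuleCat.{w} k))] (α : F ⟶ G)
    (hker : ∀ j (x : F.obj j), α.app j x = 0 → ∃ (j' : J) (f : j ⟶ j'), F.map f x = 0)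
    (hsurj : ∀ j (y : G.obj j), ∃ (j' : J) (f : j ⟶ j') (x : F.obj j'), α.app j' x = G.map f y) :
    IsIso (colimMap α) := by
  refine isIso_colimit_desc ((Cocone.precompose α).obj (colimit.cocone G))
    (fun j x hx => ?_) fun y => ?_
  · have hx : colimit.ι G j (α.app j x) = colimit.ι G j 0 := hx.trans (map_zero _).symm
    obtain ⟨j', f, g, hfg⟩ := Concrete.colimit_exists_of_rep_eq G _ _ hx
    have hαf : α.app j' (F.map f x) = 0 :=
      congr($(α.naturality f) x).trans (hfg.trans (map_zero (G.map g).hom))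
    obtain ⟨j'', f', hf'⟩ := hker j' _ hαf
    exact ⟨j'', f ≫ f', congr($(F.map_comp f f') x).trans hf'⟩
  · obtain ⟨j, y, rfl⟩ := Concrete.colimit_exists_rep G y
    obtain ⟨j', f, x, hx⟩ := hsurj j y
    exact ⟨j', x, (congrArg (colimit.ι G j') hx).trans congr($(colimit.w G f) y)⟩

end FilteredColimit

section LocalCohomology

open Limits Abelian Opposite

universe v

variable {A : Type v} [CommRing A] (I : Ideal A) (N E : ModuleCat.{v} A) (i j : ℕ)

/-- The transition map `Ext^i(A/I^s, N) → Ext^i(A/I^t, N)` of the system computing `H^i_I(N)`. -/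
def extQuotientPowMap {s t : ℕ} (h : s ≤ t) :
    Abelian.Ext (ModuleCat.of A (A ⧸ I ^ s)) N i →ₗ[A]
      Abelian.Ext (ModuleCat.of A (A ⧸ I ^ t)) N i :=
  Ext.precompOfLinear (Ext.mk₀ (ModuleCat.ofHom (Submodule.factor (Ideal.pow_le_pow_right h))))
    A N (zero_add i)

lemma extQuotientPowMap_apply {s t : ℕ} (h : s ≤ t)
    (x : Abelian.Ext (ModuleCat.of A (A ⧸ I ^ s)) N i) :
    extQuotientPowMap I N i h x =
      (Ext.mk₀ (ModuleCat.ofHom (Submodule.factor (Ideal.pow_le_pow_right h)))).comp x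
        (zero_add i) :=
  rfl

lemma extQuotientPowMap_rfl (t : ℕ) (x : Abelian.Ext (ModuleCat.of A (A ⧸ I ^ t)) N i) :
    extQuotientPowMap I N i le_rfl x = x := by
  have h : ModuleCat.ofHom (Submodule.factor (Ideal.pow_le_pow_right (I := I) (le_refl t))) =
      𝟙 (ModuleCat.of A (A ⧸ I ^ t)) := by ext; rfl
  rw [extQuotientPowMap_apply, h, Ext.mk₀_id_comp]

/-- The system `t ↦ Ext^i(A/I^t, N)` whose colimit is `H^i_I(N)`. -/
def extQuotientPowDiagram : ℕᵒᵖᵒᵖ ⥤ ModuleCat.{v} A :=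
  (localCohomology.ringModIdeals (localCohomology.idealPowersDiagram I)).op ⋙ extFunctorLeft A N i

/-- Local cohomology as the colimit of derived-category `Ext` modules. -/
def localCohomologyIsoColimit :
    (localCohomology I i).obj N ≅ colimit (extQuotientPowDiagram I N i) :=
  colimitObjIsoColimitCompEvaluation
    (localCohomology.diagram (localCohomology.idealPowersDiagram I) i) N ≪≫
    HasColimit.isoOfNatIso (Functor.isoWhiskerLeft _ (extFlipObjIso N i))

instance preservesFilteredColimits_forget :
    PreservesFilteredColimitsOfSize.{0, 0} (forget (ModuleCat.{v} A)) :=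
  preservesSmallestFilteredColimits_of_preservesFilteredColimits.{v, v} _

variable {N E i j}

lemma nonempty_localCohomology_equiv_of_cocone
    (φ : ∀ t, Abelian.Ext (ModuleCat.of A (A ⧸ I ^ t)) N i →ₗ[A] E)
    (hφ : ∀ s t (h : s ≤ t) x, φ t (extQuotientPowMap I N i h x) = φ s x)
    (hker : ∀ s x, φ s x = 0 → ∃ t, ∃ h : s ≤ t, extQuotientPowMap I N i h x = 0)
    (hsurj : ∀ y : E, ∃ t x, φ t x = y) :
    Nonempty ((localCohomology I i).obj N ≃ₗ[A] E) := by
  let c : Cocone (extQuotientPowDiagram I N i) :=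
    { pt := E
      ι :=
        { app := fun t => ModuleCat.ofHom (φ t.unop.unop)
          naturality := fun s t f => by ext x; exact hφ _ _ f.unop.unop.down.down x } }
  have : IsIso (colimit.desc (extQuotientPowDiagram I N i) c) :=
    isIso_colimit_desc c
      (fun s x hx =>
        let ⟨t, h, ht⟩ := hker s.unop.unop x hx
        ⟨op (op t), (homOfLE h).op.op, ht⟩)
      fun y =>
        let ⟨t, x, hx⟩ := hsurj y
        ⟨op (op t), x, hx⟩
  exact ⟨(localCohomologyIsoColimit I N i ≪≫ asIso (colimit.desc _ c)).toLinearEquiv⟩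

lemma nonempty_localCohomology_equiv_of_natTrans
    (φ : ∀ t, Abelian.Ext (ModuleCat.of A (A ⧸ I ^ t)) N i →ₗ[A]
      Abelian.Ext (ModuleCat.of A (A ⧸ I ^ t)) E j)
    (hφ : ∀ s t (h : s ≤ t) x,
      φ t (extQuotientPowMap I N i h x) = extQuotientPowMap I E j h (φ s x))
    (hker : ∀ s x, φ s x = 0 → ∃ t, ∃ h : s ≤ t, extQuotientPowMap I N i h x = 0)
    (hsurj : ∀ s y, ∃ t, ∃ h : s ≤ t, ∃ x, φ t x = extQuotientPowMap I E j h y) :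
    Nonempty ((localCohomology I i).obj N ≃ₗ[A] (localCohomology I j).obj E) := by
  let α : extQuotientPowDiagram I N i ⟶ extQuotientPowDiagram I E j :=
    { app := fun t => ModuleCat.ofHom (φ t.unop.unop)
      naturality := fun s t f => by ext x; exact hφ _ _ f.unop.unop.down.down x }
  have : IsIso (colimMap α) :=
    isIso_colimMap_of_isFiltered α
      (fun s x hx =>
        let ⟨t, h, ht⟩ := hker s.unop.unop x hx
        ⟨op (op t), (homOfLE h).op.op, ht⟩)
      fun s y =>
        let ⟨t, h, x, hx⟩ := hsurj s.unop.unop y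
        ⟨op (op t), (homOfLE h).op.op, x, hx⟩
  exact ⟨(localCohomologyIsoColimit I N i ≪≫ asIso (colimMap α) ≪≫
    (localCohomologyIsoColimit I E j).symm).toLinearEquiv⟩

end LocalCohomology

section ExtVanishing

open Limits Abelian Opposite

section

variable {C : Type*} [Category* C] [Abelian C] [HasExt C] {S : ShortComplex C} {X X' Y : C} {n : ℕ}

lemma subsingleton_ext_of_isZero (hX : IsZero X) : Subsingleton (Abelian.Ext X Y n) :=
  subsingleton_of_forall_eq 0 fun x => by
    rw [← Ext.mk₀_id_comp x, hX.eq_of_src (𝟙 X) 0, Ext.mk₀_zero, Ext.zero_comp]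

lemma subsingleton_ext_congr_left (e : X ≅ X') :
    Subsingleton (Abelian.Ext X Y n) ↔ Subsingleton (Abelian.Ext X' Y n) :=
  (((extFunctor n).mapIso e.op).app Y).addCommGroupIsoToAddEquiv.symm.toEquiv.subsingleton_congr

lemma subsingleton_ext_middle (hS : S.ShortExact) (h₁ : Subsingleton (Abelian.Ext S.X₁ Y n))
    (h₃ : Subsingleton (Abelian.Ext S.X₃ Y n)) : Subsingleton (Abelian.Ext S.X₂ Y n) :=
  subsingleton_of_forall_eq 0 fun x => by
    obtain ⟨y, rfl⟩ := Ext.contravariant_sequence_exact₂ hS Y x (Subsingleton.elim _ _)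
    rw [Subsingleton.elim y 0, Ext.comp_zero]

lemma subsingleton_ext_right (hS : S.ShortExact) (h₂ : Subsingleton (Abelian.Ext S.X₂ Y n))
    (h₁ : ∀ m, m + 1 = n → Subsingleton (Abelian.Ext S.X₁ Y m)) :
    Subsingleton (Abelian.Ext S.X₃ Y n) := by
  rcases n with _ | n
  · have := hS.epi_g
    exact (Ext.precomp_mk₀_injective_of_epi Y S.g).subsingleton
  · have := h₁ n rfl
    refine subsingleton_of_forall_eq 0 fun x => ?_
    obtain ⟨y, rfl⟩ := Ext.contravariant_sequence_exact₃ hS Y x (Subsingleton.elim _ _)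
      (add_comm 1 n)
    rw [Subsingleton.elim y 0, Ext.comp_zero]

end

universe v

variable {A : Type v} [CommRing A] {n j : ℕ} {N X : ModuleCat.{v} A}

lemma shortExact_of_exact {X Y Z : Type v} [AddCommGroup X] [Module A X] [AddCommGroup Y]
    [Module A Y] [AddCommGroup Z] [Module A Z] {f : X →ₗ[A] Y} {g : Y →ₗ[A] Z}
    (hf : Function.Injective f) (hg : Function.Surjective g) (hfg : Function.Exact f g) :
    (ModuleCat.shortComplexOfCompEqZero f g hfg.linearMap_comp_eq_zero).ShortExact :=
  ModuleCat.shortComplex_shortExact _ hfg hf hg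

lemma subsingleton_ext_of_support_subset_zeroLocus [IsNoetherianRing A] {I : Ideal A}
    (hI : ∀ j < n, Subsingleton (Abelian.Ext (ModuleCat.of A (A ⧸ I)) N j)) (hj : j < n)
    (Y : Type v) [AddCommGroup Y] [Module A Y] [Module.Finite A Y]
    (hY : Module.support A Y ⊆ PrimeSpectrum.zeroLocus I) :
    Subsingleton (Abelian.Ext (ModuleCat.of A Y) N j) := by
  induction j using Nat.strong_induction_on generalizing Y with | _ j ih
  induction ‹Module.Finite A Y› using
    IsNoetherianRing.induction_on_isQuotientEquivQuotientPrime A with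
  | subsingleton Y => exact subsingleton_ext_of_isZero (ModuleCat.isZero_of_subsingleton _)
  | quotient Y p e =>
    rw [e.support_eq, Module.support_eq_zeroLocus, Ideal.annihilator_quotient] at hY
    have hIp : I ≤ p.asIdeal := hY fun _ h => h
    have hfactor : Function.Surjective (Submodule.factor hIp) := Submodule.factor_surjective hIp
    refine (subsingleton_ext_congr_left e.toModuleIso).2 (subsingleton_ext_right
      (LinearMap.shortExact_shortComplexKer hfactor) (hI j hj) fun m hm => ?_)
    refine ih m (by lia) (by lia) _ ?_
    refine (Module.support_subset_of_injective _ (Submodule.injective_subtype _)).trans ?_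
    rw [Module.support_eq_zeroLocus, Ideal.annihilator_quotient]
  | exact Y₁ Y₂ Y₃ f g hf hg hfg ih₁ ih₃ =>
    rw [Module.support_of_exact hfg hf hg, Set.union_subset_iff] at hY
    exact subsingleton_ext_middle (shortExact_of_exact hf hg hfg) (ih₁ hY.1) (ih₃ hY.2)

lemma subsingleton_ext_zero_iff_s17 :
    Subsingleton (Abelian.Ext X N 0) ↔ Subsingleton (X →ₗ[A] N) :=
  (Ext.addEquiv₀.trans ModuleCat.homAddEquiv).subsingleton_congr

lemma subsingleton_linearMap_of_injective {X B N : Type*} [AddCommGroup X] [Module A X]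
    [AddCommGroup B] [Module A B] [AddCommGroup N] [Module A N] [Subsingleton (X →ₗ[A] N)]
    (f : B →ₗ[A] N) (hf : Function.Injective f) : Subsingleton (X →ₗ[A] B) :=
  ⟨fun _ _ => (LinearMap.cancel_left hf).1 (Subsingleton.elim _ _)⟩

lemma subsingleton_linearMap_linearMap {X Y N : Type*} [AddCommGroup X] [Module A X]
    [AddCommGroup Y] [Module A Y] [AddCommGroup N] [Module A N] [Subsingleton (X →ₗ[A] N)] :
    Subsingleton (X →ₗ[A] Y →ₗ[A] N) :=
  ⟨fun f g => LinearMap.ext₂ fun x y =>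
    LinearMap.congr_fun (Subsingleton.elim (f.flip y) (g.flip y)) x⟩

lemma exists_dual_basis_of_projective (A P : Type*) [CommRing A] [AddCommGroup P] [Module A P]
    [Module.Projective A P] [Module.Finite A P] :
    ∃ (m : ℕ) (b : Fin m → P) (φ : Fin m → P →ₗ[A] A), ∀ p, ∑ l, φ l p • b l = p := by
  obtain ⟨m, f, g, -, -, hfg⟩ := Module.Finite.exists_comp_eq_id_of_projective A P
  refine ⟨m, fun l => f (Pi.single l 1), fun l => LinearMap.proj l ∘ₗ g, fun p => ?_⟩
  calc ∑ l, g p l • f (Pi.single l 1) = f (∑ l, g p l • Pi.single l 1) := by simp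
    _ = f (g p) := by congr 1; ext; simp [Pi.single_apply]
    _ = p := LinearMap.congr_fun hfg p

lemma subsingleton_ext_linearMap_of_projective {P N : Type v} [AddCommGroup P] [Module A P]
    [Module.Projective A P] [Module.Finite A P] [AddCommGroup N] [Module A N]
    (hN : Subsingleton (Abelian.Ext X (ModuleCat.of A N) j)) :
    Subsingleton (Abelian.Ext X (ModuleCat.of A (P →ₗ[A] N)) j) := by
  obtain ⟨m, b, φ, hb⟩ := exists_dual_basis_of_projective A P
  have hid : 𝟙 (ModuleCat.of A (P →ₗ[A] N)) =
      ∑ l, ModuleCat.ofHom (LinearMap.applyₗ (b l)) ≫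
        ModuleCat.ofHom (LinearMap.smulRightₗ (φ l)) := by
    ext u p
    simp only [ModuleCat.hom_sum, LinearMap.sum_apply]
    exact (congrArg u (hb p).symm).trans (by simp [map_sum])
  refine subsingleton_of_forall_eq 0 fun x => ?_
  rw [← Ext.comp_mk₀_id x, hid, Ext.mk₀_sum, Ext.comp_sum]
  refine Finset.sum_eq_zero fun l _ => ?_
  rw [← Ext.mk₀_comp_mk₀, ← Ext.comp_assoc_of_third_deg_zero, Subsingleton.elim (Ext.comp x _ _) 0,
    Ext.zero_comp]

end ExtVanishing

section ArtinRees

open Limits Abelian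

lemma mk₀_comp_extClass_comp_eq_zero {C : Type*} [Category* C] [Abelian C] [HasExt C]
    {S S' : ShortComplex C} (hS : S.ShortExact) (hS' : S'.ShortExact) (φ : S' ⟶ S) {N : C} {i : ℕ}
    (y : Abelian.Ext S.X₁ N i) (hy : (Ext.mk₀ φ.τ₁).comp y (zero_add i) = 0) :
    (Ext.mk₀ φ.τ₃).comp (hS.extClass.comp y (add_comm 1 i)) (zero_add (i + 1)) = 0 :=
  calc (Ext.mk₀ φ.τ₃).comp (hS.extClass.comp y (add_comm 1 i)) (zero_add (i + 1))
    _ = ((Ext.mk₀ φ.τ₃).comp hS.extClass (zero_add 1)).comp y (add_comm 1 i) :=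
      (Ext.comp_assoc _ _ _ _ _ (by lia)).symm
    _ = (hS'.extClass.comp (Ext.mk₀ φ.τ₁) (add_zero 1)).comp y (add_comm 1 i) := by
      rw [ShortComplex.ShortExact.extClass_naturality hS' hS φ]
    _ = 0 := by rw [Ext.comp_assoc_of_second_deg_zero, hy, Ext.comp_zero]

universe v

variable {A : Type v} [CommRing A] {I : Ideal A} {N : ModuleCat.{v} A}

lemma restrict_extClass_comp_eq_zero {P X P' X' : Type v} [AddCommGroup P] [Module A P]
    [AddCommGroup X] [Module A X] [AddCommGroup P'] [Module A P'] [AddCommGroup X'] [Module A X']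
    {π : P →ₗ[A] X} (hπ : Function.Surjective π) {π' : P' →ₗ[A] X'} (hπ' : Function.Surjective π')
    {f : P' →ₗ[A] P} {g : X' →ₗ[A] X} (hfg : π ∘ₗ f = g ∘ₗ π') {J : Ideal A}
    (hJ : (LinearMap.ker π').map f ≤ J • LinearMap.ker π) {i : ℕ}
    (y : Abelian.Ext (ModuleCat.of A (LinearMap.ker π)) N i)
    (hy : (Ext.mk₀ (ModuleCat.ofHom (J • ⊤ : Submodule A (LinearMap.ker π)).subtype)).comp y
      (zero_add i) = 0) :
    (Ext.mk₀ (ModuleCat.ofHom g)).comp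
      ((LinearMap.shortExact_shortComplexKer hπ).extClass.comp y (add_comm 1 i))
      (zero_add (i + 1)) = 0 := by
  have hmap : (J • ⊤ : Submodule A (LinearMap.ker π)).map (LinearMap.ker π).subtype =
      J • LinearMap.ker π := by
    rw [Submodule.map_smul'', Submodule.map_top, Submodule.range_subtype]
  let c : LinearMap.ker π' →ₗ[A] LinearMap.ker π :=
    f.restrict fun z hz => Submodule.smul_le_right (hJ ⟨z, hz, rfl⟩)
  have hc (z) : c z ∈ (J • ⊤ : Submodule A (LinearMap.ker π)) := by
    obtain ⟨w, hw, hwz⟩ := hmap.ge (hJ ⟨z, z.2, rfl⟩)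
    exact Subtype.ext (a1 := w) (a2 := c z) hwz ▸ hw
  let φ : π'.shortComplexKer ⟶ π.shortComplexKer :=
    { τ₁ := ModuleCat.ofHom (c.codRestrict _ hc) ≫ ModuleCat.ofHom (Submodule.subtype _)
      τ₂ := ModuleCat.ofHom f
      τ₃ := ModuleCat.ofHom g
      comm₁₂ := rfl
      comm₂₃ := congrArg ModuleCat.ofHom hfg }
  refine mk₀_comp_extClass_comp_eq_zero (LinearMap.shortExact_shortComplexKer hπ)
    (LinearMap.shortExact_shortComplexKer hπ') φ y ?_
  rw [← Ext.mk₀_comp_mk₀_assoc, hy, Ext.comp_zero]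

variable [IsNoetherianRing A]

lemma exists_mk₀_subtype_pow_smul_top_comp_eq_zero {s : ℕ} (hN : I ^ s ≤ Module.annihilator A N)
    {i : ℕ} (X : Type v) [AddCommGroup X] [Module A X] [Module.Finite A X]
    (x : Abelian.Ext (ModuleCat.of A X) N i) :
    ∃ t, (Ext.mk₀ (ModuleCat.ofHom (I ^ t • ⊤ : Submodule A X).subtype)).comp x
      (zero_add i) = 0 := by
  induction i generalizing X with
  | zero =>
    obtain ⟨f, rfl⟩ := (Ext.mk₀_bijective _ _).2 x
    refine ⟨s, ?_⟩
    rw [Ext.mk₀_comp_mk₀, Ext.mk₀_eq_zero_iff]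
    ext z
    have hfz : f.hom z ∈ (I ^ s • ⊤ : Submodule A X).map f.hom := ⟨z, z.2, rfl⟩
    rw [Submodule.map_smul''] at hfz
    have hbot : I ^ s • (⊤ : Submodule A N) ≤ ⊥ :=
      Submodule.smul_le.2 fun r hr y _ => Module.mem_annihilator.1 (hN hr) y
    exact hbot (Submodule.smul_mono le_rfl le_top hfz)
  | succ i ih =>
    obtain ⟨k, π, hπ⟩ := Module.Finite.exists_fin' A X
    have : Projective π.shortComplexKer.X₂ :=
      (IsProjective.iff_projective (Fin k → A)).1 inferInstance
    obtain ⟨y, rfl⟩ := precomp_extClass_surjective_of_projective_X₂ N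
      (LinearMap.shortExact_shortComplexKer hπ) i x
    obtain ⟨u, hu⟩ := ih (LinearMap.ker π) y
    obtain ⟨c, hc⟩ := Ideal.exists_pow_inf_eq_pow_smul I (LinearMap.ker π)
    have hmap : (I ^ (u + c) • ⊤ : Submodule A (Fin k → A)).map π = I ^ (u + c) • ⊤ := by
      rw [Submodule.map_smul'', Submodule.map_top, LinearMap.range_eq_top.2 hπ]
    refine ⟨u + c, restrict_extClass_comp_eq_zero hπ
      (f := (I ^ (u + c) • ⊤ : Submodule A (Fin k → A)).subtype)
      (π' := π.restrict fun z hz => hmap.le ⟨z, hz, rfl⟩) ?_ rfl ?_ y hu⟩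
    · rintro ⟨a, ha⟩
      obtain ⟨p, hp, rfl⟩ := hmap.ge ha
      exact ⟨⟨p, hp⟩, rfl⟩
    · rintro _ ⟨z, hz, rfl⟩
      have hz' := (hc _ (Nat.le_add_left c u)).le ⟨z.2, congrArg Subtype.val hz⟩
      rw [Nat.add_sub_cancel] at hz'
      exact Submodule.smul_mono le_rfl inf_le_right hz'

lemma exists_extQuotientPowMap_eq_zero {s : ℕ} (hN : I ^ s ≤ Module.annihilator A N) {i t : ℕ}
    (x : Abelian.Ext (ModuleCat.of A (A ⧸ I ^ t)) N (i + 1)) :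
    ∃ t', ∃ h : t ≤ t', extQuotientPowMap I N (i + 1) h x = 0 := by
  have hmkQ (t : ℕ) : Function.Surjective (I ^ t).mkQ := Submodule.mkQ_surjective _
  have : Projective (I ^ t).mkQ.shortComplexKer.X₂ :=
    (IsProjective.iff_projective A).1 inferInstance
  obtain ⟨y, rfl⟩ := precomp_extClass_surjective_of_projective_X₂ N
    (LinearMap.shortExact_shortComplexKer (hmkQ t)) i x
  obtain ⟨u, hu⟩ := exists_mk₀_subtype_pow_smul_top_comp_eq_zero hN _ y
  refine ⟨u + t, Nat.le_add_left _ _, restrict_extClass_comp_eq_zero (hmkQ t) (hmkQ (u + t))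
    (f := LinearMap.id) rfl ?_ y hu⟩
  rw [Submodule.ker_mkQ, Submodule.ker_mkQ, Submodule.map_id, smul_eq_mul, pow_add]

end ArtinRees

section LocalCohomologyShortExact

open Abelian

universe v

variable {A : Type v} [CommRing A] {I : Ideal A} {N E : ModuleCat.{v} A}

lemma extQuotientPowMap_comp {i j k : ℕ} (β : Abelian.Ext N E k) (hij : i + k = j) {s t : ℕ}
    (h : s ≤ t) (x : Abelian.Ext (ModuleCat.of A (A ⧸ I ^ s)) N i) :
    (extQuotientPowMap I N i h x).comp β hij = extQuotientPowMap I E j h (x.comp β hij) :=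
  Ext.comp_assoc _ _ _ (zero_add i) _ (by lia)

lemma nonempty_localCohomology_zero_equiv {s : ℕ} (hE : I ^ s ≤ Module.annihilator A E) :
    Nonempty ((localCohomology I 0).obj E ≃ₗ[A] E) := by
  let evalOne (t : ℕ) : Abelian.Ext (ModuleCat.of A (A ⧸ I ^ t)) E 0 →ₗ[A] E :=
    LinearMap.applyₗ (1 : A ⧸ I ^ t) ∘ₗ ModuleCat.homLinearEquiv (S := A).toLinearMap ∘ₗ
      Ext.linearEquiv₀ (R := A).toLinearMap
  have evalOne_mk₀ (t : ℕ) (f : ModuleCat.of A (A ⧸ I ^ t) ⟶ E) :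
      evalOne t (Ext.mk₀ f) = f.hom (1 : A ⧸ I ^ t) :=
    congr(($(Ext.linearEquiv₀ (R := A).apply_symm_apply f)).hom (1 : A ⧸ I ^ t))
  refine nonempty_localCohomology_equiv_of_cocone I evalOne (fun t t' h x => ?_)
    (fun t x hx => ⟨t, le_rfl, ?_⟩) fun y => ⟨s, ?_⟩
  · obtain ⟨f, rfl⟩ := (Ext.mk₀_bijective _ _).2 x
    rw [extQuotientPowMap_apply, Ext.mk₀_comp_mk₀, evalOne_mk₀, evalOne_mk₀]
    rfl
  · obtain ⟨f, rfl⟩ := (Ext.mk₀_bijective _ _).2 x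
    have hf : f = 0 := ModuleCat.hom_ext <| Submodule.linearMap_qext _ <| LinearMap.ext_ring <|
      (evalOne_mk₀ t f).symm.trans hx
    rw [hf, Ext.mk₀_zero, map_zero]
  · refine ⟨Ext.mk₀ (ModuleCat.ofHom ((I ^ s).liftQ (LinearMap.toSpanSingleton A E y)
      fun r hr => Module.mem_annihilator.1 (hE hr) y)), ?_⟩
    exact (evalOne_mk₀ s _).trans (one_smul A y)

variable {S : ShortComplex (ModuleCat.{v} A)}

lemma nonempty_localCohomology_equiv_succ (hS : S.ShortExact) {i : ℕ}
    (h : ∀ t, Subsingleton (Abelian.Ext (ModuleCat.of A (A ⧸ I ^ t)) S.X₂ i))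
    (h' : ∀ t, Subsingleton (Abelian.Ext (ModuleCat.of A (A ⧸ I ^ t)) S.X₂ (i + 1))) :
    Nonempty ((localCohomology I i).obj S.X₃ ≃ₗ[A] (localCohomology I (i + 1)).obj S.X₁) := by
  refine nonempty_localCohomology_equiv_of_natTrans I
    (fun t => Ext.postcompOfLinear hS.extClass A _ rfl)
    (fun s t hst x => extQuotientPowMap_comp _ rfl hst x)
    (fun t x hx => ⟨t, le_rfl, ?_⟩) fun t y => ⟨t, le_rfl, ?_⟩
  · obtain ⟨y, rfl⟩ := Ext.covariant_sequence_exact₃ _ hS x rfl hx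
    rw [Subsingleton.elim y 0, Ext.zero_comp, map_zero]
  · rw [extQuotientPowMap_rfl]
    exact Ext.covariant_sequence_exact₁ _ hS y (Subsingleton.elim _ _) rfl

lemma nonempty_localCohomology_equiv_of_pow_le_annihilator [IsNoetherianRing A]
    (hS : S.ShortExact) {s : ℕ} (hs : I ^ s ≤ Module.annihilator A S.X₃) (i : ℕ) :
    Nonempty ((localCohomology I (i + 2)).obj S.X₁ ≃ₗ[A]
      (localCohomology I (i + 2)).obj S.X₂) := by
  refine nonempty_localCohomology_equiv_of_natTrans I
    (fun t => Ext.postcompOfLinear (Ext.mk₀ S.f) A _ (add_zero _))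
    (fun s t hst x => extQuotientPowMap_comp _ (add_zero _) hst x) (fun t x hx => ?_) fun t y => ?_
  · obtain ⟨y, rfl⟩ := Ext.covariant_sequence_exact₁ _ hS x hx (n₀ := i + 1) rfl
    obtain ⟨t', ht, hy⟩ := exists_extQuotientPowMap_eq_zero hs y
    exact ⟨t', ht, by rw [← extQuotientPowMap_comp, hy, Ext.zero_comp]⟩
  · obtain ⟨t', ht, hy⟩ := exists_extQuotientPowMap_eq_zero hs (y.comp (Ext.mk₀ S.g) (add_zero _))
    rw [← extQuotientPowMap_comp] at hy
    exact ⟨t', ht, Ext.covariant_sequence_exact₂ _ hS _ hy⟩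

end LocalCohomologyShortExact

section DualSequences

open Abelian

universe v

variable {A : Type v} [CommRing A] {X P Q N : Type v} [AddCommGroup X] [Module A X]
  [AddCommGroup P] [Module A P] [AddCommGroup Q] [Module A Q] [AddCommGroup N] [Module A N]

lemma exact_lcomp_rangeRestrict_lcomp {d : Q →ₗ[A] P} {π : P →ₗ[A] X} (hdπ : Function.Exact d π)
    (hπ : Function.Surjective π) :
    Function.Exact (LinearMap.lcomp A N π) (LinearMap.lcomp A N d).rangeRestrict :=
  fun f => Subtype.ext_iff.trans (LinearMap.exact_lcomp_of_exact_of_surjective _ hdπ hπ f)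

variable {π : P →ₗ[A] X} (hπ : Function.Surjective π)

variable (N) in
/-- The connecting map `Hom(ker π, N) → Ext¹(X, N)` of `0 → ker π → P → X → 0`. -/
def extConnectingHom :
    (LinearMap.ker π →ₗ[A] N) →ₗ[A] Abelian.Ext (ModuleCat.of A X) (ModuleCat.of A N) 1 :=
  Ext.precompOfLinear (LinearMap.shortExact_shortComplexKer hπ).extClass A _ (add_zero 1) ∘ₗ
    (Ext.linearEquiv₀ (R := A)).symm.toLinearMap ∘ₗ
    (ModuleCat.homLinearEquiv (M := ModuleCat.of A (LinearMap.ker π))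
      (N := ModuleCat.of A N) (S := A)).symm.toLinearMap

lemma extConnectingHom_apply (f : LinearMap.ker π →ₗ[A] N) :
    extConnectingHom N hπ f = (LinearMap.shortExact_shortComplexKer hπ).extClass.comp
      (Ext.mk₀ (ModuleCat.ofHom f)) (add_zero 1) :=
  rfl

lemma extConnectingHom_surjective [Module.Projective A P] :
    Function.Surjective (extConnectingHom N hπ) := by
  have : Projective π.shortComplexKer.X₂ := (IsProjective.iff_projective P).1 inferInstance
  intro x
  obtain ⟨y, hy⟩ := precomp_extClass_surjective_of_projective_X₂ (ModuleCat.of A N)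
    (LinearMap.shortExact_shortComplexKer hπ) 0 x
  obtain ⟨f, rfl⟩ := (Ext.mk₀_bijective _ _).2 y
  exact ⟨f.hom, hy⟩

lemma exact_subtype_extConnectingHom :
    Function.Exact (LinearMap.range (LinearMap.lcomp A N (LinearMap.ker π).subtype)).subtype
      (extConnectingHom N hπ) := by
  rw [LinearMap.exact_iff, Submodule.range_subtype]
  refine le_antisymm (fun f hf => ?_) ?_
  · obtain ⟨y, hy⟩ := Ext.contravariant_sequence_exact₁ (LinearMap.shortExact_shortComplexKer hπ) _
      (Ext.mk₀ (ModuleCat.ofHom f)) (add_zero 1) ((extConnectingHom_apply hπ f).symm.trans hf)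
    obtain ⟨g, rfl⟩ := (Ext.mk₀_bijective _ _).2 y
    rw [Ext.mk₀_comp_mk₀] at hy
    exact ⟨g.hom, congrArg ModuleCat.Hom.hom ((Ext.mk₀_bijective _ _).1 hy)⟩
  · rintro _ ⟨g, rfl⟩
    have hS := LinearMap.shortExact_shortComplexKer hπ
    calc extConnectingHom N hπ (g ∘ₗ (LinearMap.ker π).subtype)
      _ = hS.extClass.comp (Ext.mk₀ (π.shortComplexKer.f ≫ ModuleCat.ofHom g)) (add_zero 1) :=
        extConnectingHom_apply hπ _
      _ = (hS.extClass.comp (Ext.mk₀ π.shortComplexKer.f) (add_zero 1)).comp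
            (Ext.mk₀ (ModuleCat.ofHom g)) (add_zero 1) := by
        rw [← Ext.mk₀_comp_mk₀, ← Ext.comp_assoc_of_second_deg_zero]
      _ = 0 := by rw [hS.extClass_comp, Ext.zero_comp]

lemma nonempty_ext_ker_equiv_ext_succ (hπ : Function.Surjective π) [Module.Projective A P]
    (N : ModuleCat.{v} A) (i : ℕ) :
    Nonempty (Abelian.Ext (ModuleCat.of A (LinearMap.ker π)) N (i + 1) ≃ₗ[A]
      Abelian.Ext (ModuleCat.of A X) N (i + 2)) := by
  have hS := LinearMap.shortExact_shortComplexKer hπ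
  have : Projective π.shortComplexKer.X₂ := (IsProjective.iff_projective P).1 inferInstance
  refine ⟨LinearEquiv.ofBijective (Ext.precompOfLinear hS.extClass A N (add_comm 1 (i + 1)))
    ⟨(injective_iff_map_eq_zero _).2 fun x hx => ?_,
      precomp_extClass_surjective_of_projective_X₂ N hS (i + 1)⟩⟩
  obtain ⟨y, rfl⟩ := Ext.contravariant_sequence_exact₁ hS _ x (add_comm 1 (i + 1)) hx
  rw [Ext.eq_zero_of_projective y, Ext.comp_zero]

lemma subsingleton_ext_one_linearMap {Z : ModuleCat.{v} A}
    (h₀ : Subsingleton (Abelian.Ext Z (ModuleCat.of A N) 0))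
    (h₁ : Subsingleton (Abelian.Ext Z (ModuleCat.of A N) 1)) [Module.Finite A X] :
    Subsingleton (Abelian.Ext Z (ModuleCat.of A (X →ₗ[A] N)) 1) := by
  obtain ⟨k, π, hπ⟩ := Module.Finite.exists_fin' A X
  have hS := shortExact_of_exact (LinearMap.lcomp_injective_of_surjective _ hπ)
    (LinearMap.surjective_rangeRestrict _)
    (exact_lcomp_rangeRestrict_lcomp (N := N) (LinearMap.exact_subtype_ker_map π) hπ)
  have := subsingleton_ext_zero_iff_s17.1 h₀
  have : Subsingleton (Z →ₗ[A] LinearMap.ker π →ₗ[A] N) := subsingleton_linearMap_linearMap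
  have h₀' : Subsingleton (Abelian.Ext Z (ModuleCat.of A
      (LinearMap.range (LinearMap.lcomp A N (LinearMap.ker π).subtype))) 0) :=
    subsingleton_ext_zero_iff_s17.2 (subsingleton_linearMap_of_injective _
      (Submodule.subtype_injective _))
  have h₁' := subsingleton_ext_linearMap_of_projective (P := Fin k → A) h₁
  refine subsingleton_of_forall_eq 0 fun x => ?_
  obtain ⟨y, rfl⟩ := Ext.covariant_sequence_exact₁ Z hS x (h₁'.elim _ _) (zero_add 1)
  rw [h₀'.elim y 0, Ext.zero_comp]

end DualSequences

section ExtLocalCohomology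

open Abelian

universe v

variable {A : Type v} [CommRing A] {I : Ideal A} {X P Q N : Type v} [AddCommGroup X] [Module A X]
  [AddCommGroup P] [Module A P] [AddCommGroup Q] [Module A Q] [AddCommGroup N] [Module A N]
  {n : ℕ}

lemma subsingleton_ext_quotient_pow [IsNoetherianRing A] {N : ModuleCat.{v} A}
    (hI : ∀ j < n, Subsingleton (Abelian.Ext (ModuleCat.of A (A ⧸ I)) N j)) {j : ℕ} (hj : j < n)
    (t : ℕ) : Subsingleton (Abelian.Ext (ModuleCat.of A (A ⧸ I ^ t)) N j) := by
  refine subsingleton_ext_of_support_subset_zeroLocus hI hj _ ?_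
  rw [Module.support_eq_zeroLocus, Ideal.annihilator_quotient]
  rcases eq_or_ne t 0 with rfl | ht
  · simp
  · exact (PrimeSpectrum.zeroLocus_pow I ht).le

lemma nonempty_ext_one_equiv_localCohomology
    (h₀ : ∀ t, Subsingleton (Abelian.Ext (ModuleCat.of A (A ⧸ I ^ t)) (ModuleCat.of A N) 0))
    (h₁ : ∀ t, Subsingleton (Abelian.Ext (ModuleCat.of A (A ⧸ I ^ t)) (ModuleCat.of A N) 1))
    [Module.Projective A P] {π : P →ₗ[A] X} [Module.Finite A (LinearMap.ker π)]
    (hπ : Function.Surjective π) {s : ℕ}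
    (hs : I ^ s ≤ Module.annihilator A (Abelian.Ext (ModuleCat.of A X) (ModuleCat.of A N) 1)) :
    Nonempty (Abelian.Ext (ModuleCat.of A X) (ModuleCat.of A N) 1 ≃ₗ[A]
      (localCohomology I 1).obj (ModuleCat.of A
        (LinearMap.range (LinearMap.lcomp A N (LinearMap.ker π).subtype)))) := by
  obtain ⟨e₀⟩ := nonempty_localCohomology_zero_equiv (E := ModuleCat.of A (Abelian.Ext _ _ 1)) hs
  obtain ⟨e₁⟩ := nonempty_localCohomology_equiv_succ (I := I) (i := 0)
    (shortExact_of_exact (Submodule.subtype_injective _) (extConnectingHom_surjective hπ)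
      (exact_subtype_extConnectingHom hπ))
    (fun t => subsingleton_ext_zero_iff_s17.2 <|
      have := subsingleton_ext_zero_iff_s17.1 (h₀ t)
      subsingleton_linearMap_linearMap)
    fun t => subsingleton_ext_one_linearMap (h₀ t) (h₁ t)
  exact ⟨e₀.symm.trans e₁⟩

lemma nonempty_localCohomology_range_lcomp_equiv_succ [IsNoetherianRing A] {i : ℕ}
    (h : ∀ t, Subsingleton (Abelian.Ext (ModuleCat.of A (A ⧸ I ^ t)) (ModuleCat.of A N) (i + 1)))
    (h' : ∀ t, Subsingleton (Abelian.Ext (ModuleCat.of A (A ⧸ I ^ t)) (ModuleCat.of A N) (i + 2)))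
    [Module.Projective A P] {π : P →ₗ[A] X} (hπ : Function.Surjective π)
    [Module.Projective A Q] [Module.Finite A Q] {π' : Q →ₗ[A] LinearMap.ker π}
    (hπ' : Function.Surjective π') {s : ℕ}
    (hs : I ^ s ≤ Module.annihilator A (Abelian.Ext (ModuleCat.of A X) (ModuleCat.of A N) 1)) :
    Nonempty ((localCohomology I (i + 1)).obj (ModuleCat.of A
        (LinearMap.range (LinearMap.lcomp A N (LinearMap.ker π').subtype))) ≃ₗ[A]
      (localCohomology I (i + 2)).obj (ModuleCat.of A
        (LinearMap.range (LinearMap.lcomp A N (LinearMap.ker π).subtype)))) := by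
  obtain ⟨e⟩ := nonempty_localCohomology_equiv_succ (I := I)
    (shortExact_of_exact (LinearMap.lcomp_injective_of_surjective _ hπ')
      (LinearMap.surjective_rangeRestrict _)
      (exact_lcomp_rangeRestrict_lcomp (N := N) (LinearMap.exact_subtype_ker_map π') hπ'))
    (fun t => subsingleton_ext_linearMap_of_projective (h t))
    fun t => subsingleton_ext_linearMap_of_projective (h' t)
  obtain ⟨e'⟩ := nonempty_localCohomology_equiv_of_pow_le_annihilator
    (shortExact_of_exact (Submodule.subtype_injective _) (extConnectingHom_surjective hπ)
      (exact_subtype_extConnectingHom hπ)) hs i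
  exact ⟨e.trans e'.symm⟩

lemma nonempty_ext_equiv_localCohomology_range_lcomp [IsNoetherianRing A]
    (hI : ∀ j < n, Subsingleton (Abelian.Ext (ModuleCat.of A (A ⧸ I)) (ModuleCat.of A N) j))
    {i : ℕ} (hi : i + 1 < n) [Module.Projective A P] [Module.Finite A P] {π : P →ₗ[A] X}
    (hπ : Function.Surjective π)
    (hX : ∀ j ≤ i, ∃ s, I ^ s ≤
      Module.annihilator A (Abelian.Ext (ModuleCat.of A X) (ModuleCat.of A N) (j + 1))) :
    Nonempty (Abelian.Ext (ModuleCat.of A X) (ModuleCat.of A N) (i + 1) ≃ₗ[A]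
      (localCohomology I (i + 1)).obj (ModuleCat.of A
        (LinearMap.range (LinearMap.lcomp A N (LinearMap.ker π).subtype)))) := by
  have hpow {j : ℕ} (hj : j < n) := subsingleton_ext_quotient_pow hI hj
  induction i generalizing P X with
  | zero =>
    obtain ⟨s, hs⟩ := hX 0 le_rfl
    exact nonempty_ext_one_equiv_localCohomology (hpow (by lia)) (hpow hi) hπ hs
  | succ i ih =>
    obtain ⟨k, π', hπ'⟩ := Module.Finite.exists_fin' A (LinearMap.ker π)
    have hker (j : ℕ) (hj : j ≤ i) : ∃ s, I ^ s ≤ Module.annihilator A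
        (Abelian.Ext (ModuleCat.of A (LinearMap.ker π)) (ModuleCat.of A N) (j + 1)) := by
      obtain ⟨shift⟩ := nonempty_ext_ker_equiv_ext_succ hπ (ModuleCat.of A N) j
      exact shift.annihilator_eq ▸ hX (j + 1) (by lia)
    obtain ⟨shift⟩ := nonempty_ext_ker_equiv_ext_succ hπ (ModuleCat.of A N) i
    obtain ⟨e⟩ := ih (by lia) hπ' hker
    obtain ⟨s, hs⟩ := hX 0 (Nat.zero_le _)
    obtain ⟨e'⟩ := nonempty_localCohomology_range_lcomp_equiv_succ
      (hpow (by lia)) (hpow hi) hπ hπ' hs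
    exact ⟨shift.symm.trans (e.trans e')⟩

lemma nonempty_range_lcomp_subtype_ker_equiv {d : Q →ₗ[A] P} {π : P →ₗ[A] X}
    (hdπ : LinearMap.range d = LinearMap.ker π) :
    Nonempty (LinearMap.range (LinearMap.lcomp A N (LinearMap.ker π).subtype) ≃ₗ[A]
      LinearMap.range (LinearMap.lcomp A N d)) := by
  have hmap : (LinearMap.range (LinearMap.lcomp A N (LinearMap.range d).subtype)).map
      (LinearMap.lcomp A N d.rangeRestrict) = LinearMap.range (LinearMap.lcomp A N d) :=
    (LinearMap.range_comp _ _).symm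
  rw [← hdπ, ← hmap]
  exact ⟨Submodule.equivMapOfInjective _
    (LinearMap.lcomp_injective_of_surjective _ d.surjective_rangeRestrict) _⟩

lemma exists_jacobson_pow_le_annihilator {M : Type*} [AddCommGroup M] [Module A M]
    (hM : IsFiniteLength A M) : ∃ s, Ring.jacobson A ^ s ≤ Module.annihilator A M := by
  induction hM with
  | of_subsingleton => exact ⟨0, fun _ _ => Module.mem_annihilator.2 fun _ => Subsingleton.elim _ _⟩
  | @of_simple_quotient M _ _ N _ _ ih =>
    obtain ⟨s, hs⟩ := ih
    have hN {r : A} (hr : r ∈ Ring.jacobson A) (x : M) : r • x ∈ N :=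
      (Submodule.Quotient.mk_eq_zero N).1 <| Module.mem_annihilator.1
        (IsSemisimpleModule.jacobson_le_annihilator A (M ⧸ N) hr) (Submodule.Quotient.mk x)
    refine ⟨s + 1, pow_succ (Ring.jacobson A) s ▸ Ideal.mul_le.2 fun a ha b hb =>
      Module.mem_annihilator.2 fun x => ?_⟩
    rw [mul_smul]
    exact congrArg Subtype.val (Module.mem_annihilator.1 (hs ha) ⟨b • x, hN hb x⟩)

end ExtLocalCohomology

section Depth

open Abelian

universe v

/-- Comparison of the `Ext` modules used in the statement with those of the derived category. -/
def extMEquiv (A : Type v) [CommRing A] (i : ℕ) (M N : Type v) [AddCommGroup M] [Module A M]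
    [AddCommGroup N] [Module A N] :
    extM A i M N ≃ₗ[A] Abelian.Ext (ModuleCat.of A M) (ModuleCat.of A N) i :=
  ((extFlipObjIso (ModuleCat.of A N) i).app (Opposite.op (ModuleCat.of A M))).toLinearEquiv

lemma subsingleton_ext_of_lt_edepth {A : Type v} [CommRing A] {I : Ideal A} {N : Type v}
    [AddCommGroup N] [Module A N] {j : ℕ} (hj : (j : ℕ∞) < edepth A I N) :
    Subsingleton (Abelian.Ext (ModuleCat.of A (A ⧸ I)) (ModuleCat.of A N) j) := by
  have : Subsingleton (extM A j (A ⧸ I) N) := by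
    by_contra h
    exact hj.not_ge (sInf_le ⟨j, rfl, h⟩)
  exact (extMEquiv A j (A ⧸ I) N).symm.injective.subsingleton

end Depth

end

theorem stmt17_general (I : Ideal R) {M N P₀ P₁ : Type u} [AddCommGroup M] [Module R M]
    [AddCommGroup N] [Module R N] [AddCommGroup P₀] [Module R P₀] [Module.Projective R P₀]
    [Module.Finite R P₀] [AddCommGroup P₁] [Module R P₁] {ε : P₀ →ₗ[R] M}
    (hε : Function.Surjective ε) {d : P₁ →ₗ[R] P₀} (hd : LinearMap.range d = LinearMap.ker ε)
    (n : ℕ) (hn : (n : ℕ∞) ≤ edepth R I N)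
    (hann : ∀ i : ℕ, 1 ≤ i → i < n → ∃ s, I ^ s ≤ Module.annihilator R (extM R i M N)) :
    ∀ i : ℕ, 1 ≤ i → i < n →
      Nonempty (extM R i M N ≃ₗ[R] locCoh R I i (LinearMap.range (LinearMap.lcomp R N d))) := by
  intro i hi hin
  obtain ⟨i, rfl⟩ := Nat.exists_eq_add_of_le' hi
  have hvanish (j : ℕ) (hj : j < n) := subsingleton_ext_of_lt_edepth
    ((Nat.cast_lt.2 hj).trans_le hn)
  obtain ⟨e⟩ := nonempty_ext_equiv_localCohomology_range_lcomp hvanish hin hε fun j hj =>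
    (extMEquiv R (j + 1) M N).annihilator_eq ▸ hann (j + 1) (by lia) (by lia)
  obtain ⟨b⟩ := nonempty_range_lcomp_subtype_ker_equiv (N := N) hd
  exact ⟨extMEquiv R (i + 1) M N ≪≫ₗ e ≪≫ₗ
    ((localCohomology I (i + 1)).mapIso b.toModuleIso).toLinearEquiv⟩

theorem stmt17 [IsLocalRing R] (h2 : 2 ≤ rdepth R)
    (M : Type u) [AddCommGroup M] [Module R M] [Module.Finite R M]
    (F : MinRes R M) (n : ℕ) (h1 : 1 < n) (hn : (n : ℕ∞) ≤ rdepth R)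
    (hlen : ∀ i : ℕ, 1 ≤ i → i < n → IsFiniteLength R (extM R i M R)) :
    ∀ i : ℕ, 1 ≤ i → i < n →
      Nonempty (extM R i M R ≃ₗ[R] locCoh R (IsLocalRing.maximalIdeal R) i F.lambdaMod) := by
  intro i hi hin
  have := F.projective 0
  have := F.finite 0
  exact stmt17_general R (IsLocalRing.maximalIdeal R) F.surj F.exact0 n hn
    (fun j hj hjn => IsLocalRing.ringJacobson_eq_maximalIdeal R ▸
      exists_jacobson_pow_le_annihilator (hlen j hj hjn)) i hi hin

end Statements
end
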